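/- Every 4-edge-connected graph that has at most five edge-cuts of size 4 and no edge-cuts of size 5 is Z_3-connected. -/

import Mathlib

open Finset

/-- A finite multigraph without loops: each edge `e` has two distinct
endpoints `fst e` and `snd e`.  An orientation is a map `D : E → Bool`,
where `D e = true` means `e` is directed from `fst e` to `snd e`. -/
structure Multigraph (V : Type) (E : Type) where
  fst : E → V
  snd : E → V
  no_loop : ∀ e, fst e ≠ snd e

namespace Multigraph

variable {V E : Type} [Fintype V] [DecidableEq V] [Fintype E] [DecidableEq E]

/-- The tail (initial vertex) of edge `e` under orientation `D`. -/
def tail (G : Multigraph V E) (D : E → Bool) (e : E) : V :=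
  if D e then G.fst e else G.snd e

/-- The head (terminal vertex) of edge `e` under orientation `D`. -/
def head (G : Multigraph V E) (D : E → Bool) (e : E) : V :=
  if D e then G.snd e else G.fst e

/-- Outdegree `d⁺_D(v)` (as an integer, for convenience). -/
def outDeg (G : Multigraph V E) (D : E → Bool) (v : V) : ℤ :=
  ((univ.filter fun e => G.tail D e = v).card : ℤ)

/-- Indegree `d⁻_D(v)`. -/
def inDeg (G : Multigraph V E) (D : E → Bool) (v : V) : ℤ :=
  ((univ.filter fun e => G.head D e = v).card : ℤ)

/-- `e` is incident with `v`. -/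
def Incident (G : Multigraph V E) (v : V) (e : E) : Prop :=
  G.fst e = v ∨ G.snd e = v

instance (G : Multigraph V E) (v : V) : DecidablePred (G.Incident v) := fun e =>
  inferInstanceAs (Decidable (G.fst e = v ∨ G.snd e = v))

/-- The degree of a vertex. -/
def degree (G : Multigraph V E) (v : V) : ℕ :=
  (univ.filter fun e => G.Incident v e).card

/-- The edge-cut `∂_G(A)`: edges with exactly one endpoint in `A`. -/
def cut (G : Multigraph V E) (A : Finset V) : Finset E :=
  univ.filter fun e => ¬ ((G.fst e ∈ A) ↔ (G.snd e ∈ A))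

/-- `G` is `k`-edge-connected: every edge-cut has at least `k` edges. -/
def EdgeConnected (G : Multigraph V E) (k : ℕ) : Prop :=
  ∀ A : Finset V, A.Nonempty → A ≠ univ → k ≤ (G.cut A).card

/-- A boundary function: values in `ℤ₃` summing to `0`. -/
def IsBoundary (β : V → ZMod 3) : Prop := ∑ v, β v = 0

/-- `D` is a `β`-orientation: `d⁺(v) - d⁻(v) ≡ β v (mod 3)` at every vertex. -/
def IsBetaOrientation (G : Multigraph V E) (β : V → ZMod 3) (D : E → Bool) : Prop :=
  ∀ v : V, ((G.outDeg D v - G.inDeg D v : ℤ) : ZMod 3) = β v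

/-- A mod 3-orientation: `d⁺(v) ≡ d⁻(v) (mod 3)` at every vertex. -/
def IsMod3Orientation (G : Multigraph V E) (D : E → Bool) : Prop :=
  ∀ v : V, ((G.outDeg D v - G.inDeg D v : ℤ) : ZMod 3) = 0

/-- `G` admits a mod 3-orientation (equivalently, a nowhere-zero 3-flow). -/
def Mod3Orientable (G : Multigraph V E) : Prop := ∃ D, G.IsMod3Orientation D

/-- `G` is `ℤ₃`-connected. -/
def Z3Connected (G : Multigraph V E) : Prop :=
  ∀ β : V → ZMod 3, IsBoundary β → ∃ D, G.IsBetaOrientation β D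

/-- `G` is `ℤ₃`-extendable at `x`: every pre-orientation of the edges at `x`
compatible with `β x` extends to a `β`-orientation of `G`. -/
def Z3ExtendableAt (G : Multigraph V E) (x : V) : Prop :=
  ∀ β : V → ZMod 3, IsBoundary β →
    ∀ D₀ : E → Bool, ((G.outDeg D₀ x - G.inDeg D₀ x : ℤ) : ZMod 3) = β x →
      ∃ D : E → Bool, (∀ e, G.Incident x e → D e = D₀ e) ∧ G.IsBetaOrientation β D

/-- `G` is mod-3-extendable at `x`: every pre-orientation of `∂(x)` with
`d⁺(x) ≡ d⁻(x) (mod 3)` extends to a mod 3-orientation of `G`. -/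
def Mod3ExtendableAt (G : Multigraph V E) (x : V) : Prop :=
  ∀ D₀ : E → Bool, ((G.outDeg D₀ x - G.inDeg D₀ x : ℤ) : ZMod 3) = 0 →
    ∃ D : E → Bool, (∀ e, G.Incident x e → D e = D₀ e) ∧ G.IsMod3Orientation D

/-- `A` is a `k`-critical-set: `d(A) ≤ k` but every nonempty proper subset has
larger boundary. -/
def CriticalSet (G : Multigraph V E) (k : ℕ) (A : Finset V) : Prop :=
  A.Nonempty ∧ A ≠ univ ∧ (G.cut A).card ≤ k ∧
    ∀ B : Finset V, B.Nonempty → B ⊂ A → k < (G.cut B).card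

/-- The set of edge-cuts of size exactly `k` (as sets of edges). -/
def kCuts (G : Multigraph V E) (k : ℕ) : Finset (Finset E) :=
  ((univ : Finset (Finset V)).filter
    fun A => A.Nonempty ∧ A ≠ univ ∧ (G.cut A).card = k).image G.cut

end Multigraph

/-!
Every size-4 cut has two sides, so at most ten sets have a boundary of exactly four edges. The
minimal ones, the *leaves*, are pairwise disjoint by submodularity. Join a new root to the leaves by
one to three pre-oriented edges each, at most seven in total, so that the enlarged graph satisfies
the cut conditions of the Lovász–Thomassen–Wu–Zhang theorem. One edge suffices for a leaf unless it
is the unique leaf inside some larger set with four boundary edges; since there are at most ten such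
sets, this exception is rare enough to keep the total at seven.

In a minimal counterexample to the Lovász–Thomassen–Wu–Zhang theorem every cut other than those
around a vertex or the root exceeds the required size, since otherwise one could contract its two
sides in turn. As no edge can be deleted, every vertex is then tight, and up to reversal all of them
have demand `1` or `2` modulo `6`. Splitting off at contracted sets sharpens the bound on the large
cuts just enough that a neighbour `v` of the root can be removed, together with at most two
further edges at `v`, without violating the cut conditions.
-/

/-- The distance from `x` to the nearest multiple of `6`. Its values are those of `|τ|` in the
Lovász–Thomassen–Wu–Zhang theorem, once the residue of a boundary modulo `3` and the parity of a
degree are merged into one residue modulo `6`. -/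
def dist6 (x : ℤ) : ℤ := min (x % 6) (-x % 6)

lemma dist6_congr {x y : ℤ} (h : 6 ∣ x - y) : dist6 x = dist6 y := by
  unfold dist6
  omega

lemma dist6_neg (x : ℤ) : dist6 (-x) = dist6 x := by
  unfold dist6
  omega

lemma dist6_le_of_two_dvd_sub {x m : ℤ} (hpar : 2 ∣ x - m) (hm : 2 ≤ m) : dist6 x ≤ m := by
  unfold dist6
  omega

lemma exists_unit_dist6_add_le_one {x : ℤ} (hx : 2 ∣ x) : ∃ u : ℤˣ, dist6 (x + u) ≤ 1 := by
  by_cases h : x % 6 = 2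
  · exact ⟨-1, by simp only [dist6, Units.val_neg, Units.val_one]; omega⟩
  · exact ⟨1, by simp only [dist6, Units.val_one]; omega⟩

lemma exists_abs_sub_le_and_six_dvd_sub {a d m : ℤ} (hm : 2 ≤ m) (hpar : 2 ∣ d - a - m) :
    ∃ k, |k - a| ≤ m ∧ 6 ∣ k - d :=
  ⟨a + ((d - a + 2) % 6 - 2), by grind, by omega⟩

lemma exists_units_sum_mul_eq {E : Type*} {F : Finset E} {f : E → ℤ} (hf : ∀ e ∈ F, |f e| = 1)
    {k : ℤ} (hk : |k| ≤ #F) (hpar : 2 ∣ k - #F) :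
    ∃ σ : E → ℤˣ, (∀ e ∉ F, σ e = 1) ∧ ∑ e ∈ F, σ e * f e = k := by
  classical
  rw [abs_le] at hk
  obtain ⟨T, hTF, hT⟩ := exists_subset_card_eq (s := F) (n := ((k + #F) / 2).toNat) (by omega)
  refine ⟨fun e => if e ∈ F ∧ ¬(e ∈ T ↔ f e = 1) then -1 else 1, fun e he => by simp [he], ?_⟩
  calc _ = ∑ e ∈ F, (2 * (if e ∈ T then 1 else 0) - 1 : ℤ) := sum_congr rfl fun e he => by
        rcases eq_or_eq_neg_of_abs_eq (hf e he) with h | h <;> by_cases heT : e ∈ T <;>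
          simp [he, heT, h]
    _ = 2 * #T - #F := by
        rw [sum_sub_distrib, ← mul_sum, sum_boole, filter_mem_eq_inter, inter_eq_right.2 hTF]
        simp
    _ = k := by omega

lemma two_dvd_sum_units_sub_card {ι : Type*} (s : ι → ℤˣ) (S : Finset ι) :
    2 ∣ ∑ r ∈ S, (s r : ℤ) - #S := by
  rw [card_eq_sum_ones, Nat.cast_sum, ← sum_sub_distrib]
  refine dvd_sum fun r _ => ?_
  rcases Int.units_eq_one_or (s r) with h | h <;> simp [h]

lemma eq_singleton_of_sum_le_one {ι : Type*} {S : Finset ι} {w : ι → ℕ} (hw : ∀ i ∈ S, 1 ≤ w i)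
    (hS : S.Nonempty) (hsum : ∑ i ∈ S, w i ≤ 1) : ∃ i, S = {i} ∧ w i = 1 := by
  have hcard : #S = 1 := by
    have := card_nsmul_le_sum S w 1 hw
    have := card_pos.2 hS
    grind
  obtain ⟨i, rfl⟩ := card_eq_one.1 hcard
  have := hw i (mem_singleton_self i)
  exact ⟨i, rfl, by grind⟩

/-- A finite multigraph with vertex set `insert root verts`, given with a reference orientation of
its edges and with a net outflow `demand v`, read modulo `6`, to be realised at each `v ∈ verts`.
The edges at `root` are pre-oriented: they keep their reference direction, while all others may be
reversed. Loops are allowed, so that contractions only relabel endpoints. -/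
structure RootedGraph (V E : Type*) where
  root : V
  verts : Finset V
  edges : Finset E
  src : E → V
  tgt : E → V
  demand : V → ℤ

namespace RootedGraph

section Basic

variable {V E : Type*} [DecidableEq V] (G : RootedGraph V E)

/-- The signed incidence of `e` with the cut around `A`: `1` if `e` leaves `A`, `-1` if it
enters `A`, and `0` otherwise. -/
def cross (A : Finset V) (e : E) : ℤ :=
  (if G.src e ∈ A then 1 else 0) - (if G.tgt e ∈ A then 1 else 0)

/-- The number of edges in the cut around `A`. -/
def deg (A : Finset V) : ℤ := ∑ e ∈ G.edges, |G.cross A e|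

/-- The net flow out of `A` once the edges `e` with `σ e = -1` have been reversed. -/
def flow (σ : E → ℤˣ) (A : Finset V) : ℤ := ∑ e ∈ G.edges, σ e * G.cross A e

/-- The total demand of `A`. -/
def excess (A : Finset V) : ℤ := ∑ v ∈ A, G.demand v

/-- The edges incident with the root. -/
def IsRootEdge (e : E) : Prop := G.src e = G.root ∨ G.tgt e = G.root

instance : DecidablePred G.IsRootEdge := fun e =>
  inferInstanceAs (Decidable (G.src e = G.root ∨ G.tgt e = G.root))

/-- A choice of signs that respects the pre-orientation at the root. -/
def FixesRoot (σ : E → ℤˣ) : Prop := ∀ e ∈ G.edges, G.IsRootEdge e → σ e = 1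

/-- The orientation given by `σ` extends the pre-orientation at the root and meets all demands. -/
def Solves (σ : E → ℤˣ) : Prop :=
  G.FixesRoot σ ∧ ∀ v ∈ G.verts, 6 ∣ G.flow σ {v} - G.demand v

/-- The pre-orientation at the root extends to an orientation meeting all demands. -/
def Solvable : Prop := ∃ σ, G.Solves σ

/-- The number of root edges at `v`. -/
def rootDeg (v : V) : ℤ := ∑ e ∈ G.edges with G.IsRootEdge e, |G.cross {v} e|

/-- Compatibility of the data: the demands have the parity of the degrees, and the total demand
agrees with the pre-orientation at the root. -/
structure Balanced : Prop where
  root_notMem : G.root ∉ G.verts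
  src_mem : ∀ e ∈ G.edges, G.src e ∈ insert G.root G.verts
  tgt_mem : ∀ e ∈ G.edges, G.tgt e ∈ insert G.root G.verts
  two_dvd : ∀ v ∈ G.verts, 2 ∣ G.demand v - G.flow 1 {v}
  six_dvd : 6 ∣ G.excess G.verts - G.flow 1 G.verts

/-- The hypotheses of the Lovász–Thomassen–Wu–Zhang theorem. -/
structure Good : Prop extends G.Balanced where
  root_le : G.deg G.verts ≤ 4 + dist6 (G.excess G.verts)
  le_deg : ∀ A ⊆ G.verts, A.Nonempty → A ≠ G.verts → 4 + dist6 (G.excess A) ≤ G.deg A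

variable {G} {A B : Finset V} {e : E} {v : V} {σ τ : E → ℤˣ}

lemma sum_cross_singleton (A : Finset V) (e : E) : ∑ v ∈ A, G.cross {v} e = G.cross A e := by
  simp [cross, sum_sub_distrib]

lemma abs_cross_le_one (A : Finset V) (e : E) : |G.cross A e| ≤ 1 := by
  unfold cross; split_ifs <;> simp

lemma abs_cross_eq_zero_or_one (A : Finset V) (e : E) : |G.cross A e| = 0 ∨ |G.cross A e| = 1 := by
  unfold cross; split_ifs <;> simp

lemma sum_flow_singleton (σ : E → ℤˣ) (A : Finset V) : ∑ v ∈ A, G.flow σ {v} = G.flow σ A := by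
  simp only [flow]
  rw [sum_comm]
  simp only [← mul_sum, sum_cross_singleton]

lemma two_dvd_flow_sub_deg (σ : E → ℤˣ) (A : Finset V) : 2 ∣ G.flow σ A - G.deg A := by
  rw [flow, deg, ← sum_sub_distrib]
  refine dvd_sum fun e _ => ?_
  rcases Int.units_eq_one_or (σ e) with h | h <;> rw [h] <;> unfold cross <;> split_ifs <;> simp

lemma flow_congr (h : ∀ e ∈ G.edges, G.cross A e ≠ 0 → σ e = τ e) : G.flow σ A = G.flow τ A :=
  sum_congr rfl fun e he => by
    by_cases h0 : G.cross A e = 0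
    · simp [h0]
    · rw [h e he h0]

lemma excess_union (h : Disjoint A B) : G.excess (A ∪ B) = G.excess A + G.excess B :=
  sum_union h

omit [DecidableEq V] in
lemma excess_singleton (v : V) : G.excess {v} = G.demand v := sum_singleton _ _

lemma excess_erase (hv : v ∈ A) : G.excess (A.erase v) = G.excess A - G.demand v :=
  eq_sub_of_add_eq (sum_erase_add _ _ hv)

lemma exists_abs_cross_eq_one (h : 0 < G.deg A) : ∃ e ∈ G.edges, |G.cross A e| = 1 := by
  obtain ⟨e, he, hpos⟩ := exists_lt_of_sum_lt (s := G.edges) (f := fun _ => (0 : ℤ))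
    (by simpa [deg] using h)
  exact ⟨e, he, (abs_cross_eq_zero_or_one A e).resolve_left hpos.ne'⟩

lemma dvd_excess_sub_flow {k : ℤ} (h : ∀ v ∈ A, k ∣ G.demand v - G.flow σ {v}) :
    k ∣ G.excess A - G.flow σ A := by
  rw [excess, ← sum_flow_singleton, ← sum_sub_distrib]
  exact dvd_sum h

lemma Balanced.two_dvd_excess_sub_deg (hG : G.Balanced) (hA : A ⊆ G.verts) :
    2 ∣ G.excess A - G.deg A := by
  have h₁ := dvd_excess_sub_flow (G := G) fun v hv => hG.two_dvd v (hA hv)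
  have h₂ := two_dvd_flow_sub_deg (G := G) 1 A
  omega

lemma rootDeg_nonneg (v : V) : 0 ≤ G.rootDeg v := sum_nonneg fun _ _ => abs_nonneg _

lemma Balanced.deg_erase (hG : G.Balanced) (hv : v ∈ G.verts) :
    G.deg (G.verts.erase v) = G.deg G.verts + G.deg {v} - 2 * G.rootDeg v := by
  rw [rootDeg, sum_filter, deg, deg, deg, mul_sum, ← sum_add_distrib, ← sum_sub_distrib]
  refine sum_congr rfl fun e he => ?_
  have h₁ := hG.src_mem e he
  have h₂ := hG.tgt_mem e he
  have h₃ := hG.root_notMem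
  grind [cross, IsRootEdge]

lemma Balanced.rootDeg_le (hG : G.Balanced) (hv : v ∈ G.verts) : G.rootDeg v ≤ G.deg G.verts := by
  rw [rootDeg, sum_filter, deg]
  refine sum_le_sum fun e he => ?_
  have h₁ := hG.src_mem e he
  have h₂ := hG.tgt_mem e he
  have h₃ := hG.root_notMem
  grind [cross, IsRootEdge]

end Basic

section Operations

variable {V E : Type*} [DecidableEq V] (G : RootedGraph V E)

/-- Reverse the edges on which `σ` is `-1`. -/
@[simps]
def reorient (σ : E → ℤˣ) : RootedGraph V E :=
  { G with
    src := fun e => if σ e = 1 then G.src e else G.tgt e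
    tgt := fun e => if σ e = 1 then G.tgt e else G.src e }

/-- Reverse all edges and negate all demands. -/
@[simps]
def reverse : RootedGraph V E :=
  { G with src := G.tgt, tgt := G.src, demand := -G.demand }

/-- Contract everything outside `A` into the root. -/
@[simps]
def restrict (A : Finset V) : RootedGraph V E :=
  { G with
    verts := A
    src := fun e => if G.src e ∈ A then G.src e else G.root
    tgt := fun e => if G.tgt e ∈ A then G.tgt e else G.root }

/-- Contract `A` to its vertex `a`. -/
@[simps]
def contract (A : Finset V) (a : V) : RootedGraph V E :=
  { G with
    verts := insert a (G.verts \ A)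
    src := fun e => if G.src e ∈ A then a else G.src e
    tgt := fun e => if G.tgt e ∈ A then a else G.tgt e
    demand := Function.update G.demand a (G.excess A) }

variable {G} {A B : Finset V} {a v : V} {e : E} {σ τ : E → ℤˣ}

omit [DecidableEq V] in
lemma isRootEdge_reorient : (G.reorient σ).IsRootEdge e ↔ G.IsRootEdge e := by
  grind [reorient_src, reorient_tgt, reorient_root, IsRootEdge]

lemma cross_reorient : (G.reorient σ).cross A e = σ e * G.cross A e := by
  rcases Int.units_eq_one_or (σ e) with h | h <;> simp [reorient, cross, h]

lemma abs_cross_reorient : |(G.reorient σ).cross A e| = |G.cross A e| := by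
  rcases Int.units_eq_one_or (σ e) with h | h <;> simp [cross_reorient, h]

lemma deg_reorient : (G.reorient σ).deg A = G.deg A :=
  sum_congr rfl fun _ _ => abs_cross_reorient

lemma flow_reorient : (G.reorient σ).flow τ A = G.flow (τ * σ) A :=
  sum_congr rfl fun e _ => by simp [cross_reorient, mul_assoc]

lemma rootDeg_reorient (v : V) : (G.reorient σ).rootDeg v = G.rootDeg v := by
  simp only [rootDeg, isRootEdge_reorient, abs_cross_reorient]
  rfl

lemma Solvable.of_reorient (hσ : G.FixesRoot σ) (h : (G.reorient σ).Solvable) : G.Solvable := by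
  obtain ⟨τ, hτ, hflow⟩ := h
  refine ⟨τ * σ, fun e he hr => ?_, fun v hv => flow_reorient (G := G) ▸ hflow v hv⟩
  rw [Pi.mul_apply, hσ e he hr, hτ e he (isRootEdge_reorient.2 hr), one_mul]

lemma FixesRoot.flow_eq (hG : G.Balanced) (hσ : G.FixesRoot σ) :
    G.flow σ G.verts = G.flow 1 G.verts := by
  refine flow_congr fun e he h => hσ e he ?_
  have h₁ := hG.src_mem e he
  have h₂ := hG.tgt_mem e he
  grind [cross, IsRootEdge]

lemma Balanced.reorient (hG : G.Balanced) (hσ : G.FixesRoot σ) : (G.reorient σ).Balanced where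
  root_notMem := hG.root_notMem
  src_mem e he := by
    have h₁ := hG.src_mem e he
    have h₂ := hG.tgt_mem e he
    grind [reorient_src, reorient_tgt, reorient_root, reorient_verts]
  tgt_mem e he := by
    have h₁ := hG.src_mem e he
    have h₂ := hG.tgt_mem e he
    grind [reorient_src, reorient_tgt, reorient_root, reorient_verts]
  two_dvd v hv := by
    have h₁ := hG.two_dvd v hv
    have h₂ := two_dvd_flow_sub_deg (G := G) 1 {v}
    have h₃ := two_dvd_flow_sub_deg (G := G) σ {v}
    rw [flow_reorient, one_mul, reorient_demand]
    omega
  six_dvd := by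
    rw [flow_reorient, one_mul]
    exact hσ.flow_eq hG ▸ hG.six_dvd

lemma Good.reorient (hG : G.Good) (hσ : G.FixesRoot σ) : (G.reorient σ).Good where
  toBalanced := hG.toBalanced.reorient hσ
  root_le := deg_reorient.trans_le hG.root_le
  le_deg A hA hne hA' := (hG.le_deg A hA hne hA').trans_eq deg_reorient.symm

omit [DecidableEq V] in
lemma isRootEdge_reverse : G.reverse.IsRootEdge e ↔ G.IsRootEdge e := or_comm

lemma cross_reverse : G.reverse.cross A e = -G.cross A e := by
  simp only [cross, reverse_src, reverse_tgt, neg_sub]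

lemma deg_reverse : G.reverse.deg A = G.deg A :=
  sum_congr rfl fun _ _ => by rw [cross_reverse, abs_neg]

lemma flow_reverse : G.reverse.flow σ A = -G.flow σ A := by
  simp only [flow, cross_reverse, mul_neg, sum_neg_distrib]
  rfl

omit [DecidableEq V] in
lemma excess_reverse : G.reverse.excess A = -G.excess A := sum_neg_distrib _

omit [DecidableEq V] in
lemma reverse_reverse : G.reverse.reverse = G := by simp [reverse]

lemma Solvable.reverse (h : G.Solvable) : G.reverse.Solvable := by
  obtain ⟨σ, hσ, hflow⟩ := h
  refine ⟨σ, fun e he hr => hσ e he (isRootEdge_reverse.1 hr), fun v hv => ?_⟩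
  have := hflow v hv
  rw [flow_reverse, reverse_demand, Pi.neg_apply]
  omega

lemma Good.reverse (hG : G.Good) : G.reverse.Good where
  root_notMem := hG.root_notMem
  src_mem := hG.tgt_mem
  tgt_mem := hG.src_mem
  two_dvd v hv := by
    have := hG.two_dvd v hv
    rw [flow_reverse, reverse_demand, Pi.neg_apply]
    omega
  six_dvd := by
    have := hG.six_dvd
    rw [flow_reverse, excess_reverse, reverse_verts]
    omega
  root_le := by
    have := hG.root_le
    rw [deg_reverse, excess_reverse, reverse_verts]
    unfold dist6 at *
    omega
  le_deg A hA hne hA' := by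
    have := hG.le_deg A hA hne hA'
    rw [deg_reverse, excess_reverse]
    unfold dist6 at *
    omega

lemma cross_restrict (hroot : G.root ∉ A) (hBA : B ⊆ A) :
    (G.restrict A).cross B e = G.cross B e := by
  grind [restrict_src, restrict_tgt, cross]

lemma deg_restrict (hroot : G.root ∉ A) (hBA : B ⊆ A) : (G.restrict A).deg B = G.deg B :=
  sum_congr rfl fun _ _ => by rw [cross_restrict hroot hBA]

lemma flow_restrict (hroot : G.root ∉ A) (hBA : B ⊆ A) : (G.restrict A).flow σ B = G.flow σ B :=
  sum_congr rfl fun _ _ => by rw [cross_restrict hroot hBA]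

lemma Balanced.restrict (hG : G.Balanced) (hA : A ⊆ G.verts)
    (h : 6 ∣ G.excess A - G.flow 1 A) : (G.restrict A).Balanced := by
  have hroot : G.root ∉ A := fun h => hG.root_notMem (hA h)
  refine ⟨hroot, fun e _ => ?_, fun e _ => ?_, fun v hv => ?_, ?_⟩
  · grind [restrict_src, restrict_tgt, restrict_root, restrict_verts]
  · grind [restrict_src, restrict_tgt, restrict_root, restrict_verts]
  · rw [flow_restrict hroot (singleton_subset_iff.2 hv)]
    exact hG.two_dvd v (hA hv)
  · exact (flow_restrict (σ := 1) hroot Subset.rfl).symm ▸ h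

lemma Solvable.of_restrict (hG : G.Balanced) (hA : A ⊆ G.verts)
    (h : ∀ v ∈ G.verts \ A, 6 ∣ G.flow 1 {v} - G.demand v) (hs : (G.restrict A).Solvable) :
    G.Solvable := by
  have hroot : G.root ∉ A := fun h => hG.root_notMem (hA h)
  obtain ⟨σ, hσ, hflow⟩ := hs
  refine ⟨σ, fun e he hr => hσ e he ?_, fun v hv => ?_⟩
  · grind [IsRootEdge, restrict_src, restrict_tgt, restrict_root]
  by_cases hvA : v ∈ A
  · exact flow_restrict (σ := σ) hroot (singleton_subset_iff.2 hvA) ▸ hflow v hvA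
  · have hfix : G.flow σ {v} = G.flow 1 {v} := by
      refine flow_congr fun e he hc => hσ e he ?_
      grind [cross, IsRootEdge, restrict_src, restrict_tgt, restrict_root]
    exact hfix ▸ h v (mem_sdiff.2 ⟨hv, hvA⟩)

/-- The set of vertices of `G` that become `B` when `A` is contracted to `a`. -/
def expand (A : Finset V) (a : V) (B : Finset V) : Finset V := if a ∈ B then B ∪ A else B

lemma expand_singleton_self (ha : a ∈ A) : expand A a {a} = A := by
  grind [expand]

lemma expand_singleton_of_notMem (ha : a ∈ A) (hv : v ∉ A) : expand A a {v} = {v} := by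
  grind [expand]

lemma expand_subset (hA : A ⊆ G.verts) (ha : a ∈ A) (hB : B ⊆ (G.contract A a).verts) :
    expand A a B ⊆ G.verts := by
  grind [expand, contract_verts]

lemma expand_contract_verts (hA : A ⊆ G.verts) (ha : a ∈ A) :
    expand A a (G.contract A a).verts = G.verts := by
  grind [expand, contract_verts]

lemma expand_ne (hA : A ⊆ G.verts) (ha : a ∈ A) (hB : B ⊆ (G.contract A a).verts)
    (hne : B ≠ (G.contract A a).verts) :
    expand A a B ≠ G.verts := by
  contrapose! hne
  grind [expand, contract_verts]

lemma subset_expand : B ⊆ expand A a B := by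
  grind [expand]

lemma isRootEdge_contract (hA : A ⊆ G.verts) (ha : a ∈ A) (hroot : G.root ∉ G.verts) :
    (G.contract A a).IsRootEdge e ↔ G.IsRootEdge e := by
  grind [IsRootEdge, contract_src, contract_tgt, contract_root]

lemma cross_contract (hB : B ⊆ (G.contract A a).verts) :
    (G.contract A a).cross B e = G.cross (expand A a B) e := by
  grind [cross, expand, contract_src, contract_tgt, contract_verts]

lemma deg_contract (hB : B ⊆ (G.contract A a).verts) :
    (G.contract A a).deg B = G.deg (expand A a B) :=
  sum_congr rfl fun _ _ => by rw [cross_contract hB]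

lemma flow_contract (hB : B ⊆ (G.contract A a).verts) :
    (G.contract A a).flow σ B = G.flow σ (expand A a B) :=
  sum_congr rfl fun _ _ => by rw [cross_contract hB]

lemma excess_contract (ha : a ∈ A) (hB : B ⊆ (G.contract A a).verts) :
    (G.contract A a).excess B = G.excess (expand A a B) := by
  have hrest : ∀ C : Finset V, a ∉ C → (G.contract A a).excess C = G.excess C := fun C hC =>
    sum_congr rfl fun v hv => Function.update_of_ne (ne_of_mem_of_not_mem hv hC) _ _
  by_cases haB : a ∈ B
  · have hdisj : Disjoint (B.erase a) A := by
      rw [Finset.disjoint_left]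
      grind [contract_verts]
    have hunion : B ∪ A = B.erase a ∪ A := by grind
    have hsplit := excess_erase (G := G.contract A a) haB
    rw [hrest _ (notMem_erase a B), contract_demand, Function.update_self] at hsplit
    rw [expand, if_pos haB, hunion, excess_union hdisj]
    omega
  · rw [expand, if_neg haB, hrest B haB]

lemma Balanced.contract (hG : G.Balanced) (hA : A ⊆ G.verts) (ha : a ∈ A) :
    (G.contract A a).Balanced where
  root_notMem := by
    have := hG.root_notMem
    grind [contract_verts, contract_root]
  src_mem e he := by
    have := hG.src_mem e he
    grind [contract_verts, contract_root, contract_src]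
  tgt_mem e he := by
    have := hG.tgt_mem e he
    grind [contract_verts, contract_root, contract_tgt]
  two_dvd v hv := by
    have hv := singleton_subset_iff.2 hv
    have := dvd_excess_sub_flow fun u hu => hG.two_dvd u (expand_subset hA ha hv hu)
    rwa [← excess_singleton, excess_contract ha hv, flow_contract hv]
  six_dvd := by
    rw [excess_contract ha Subset.rfl, flow_contract Subset.rfl, expand_contract_verts hA ha]
    exact hG.six_dvd

lemma Good.contract (hG : G.Good) (hA : A ⊆ G.verts) (ha : a ∈ A) : (G.contract A a).Good where
  toBalanced := hG.toBalanced.contract hA ha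
  root_le := by
    rw [deg_contract Subset.rfl, excess_contract ha Subset.rfl, expand_contract_verts hA ha]
    exact hG.root_le
  le_deg B hB hne hB' := by
    rw [deg_contract hB, excess_contract ha hB]
    exact hG.le_deg _ (expand_subset hA ha hB) (hne.mono subset_expand) (expand_ne hA ha hB hB')

/-- `σ` meets the demands of `G` once `A` is contracted to a single vertex. -/
def SolvesOutside (G : RootedGraph V E) (A : Finset V) (σ : E → ℤˣ) : Prop :=
  G.FixesRoot σ ∧ (∀ v ∈ G.verts \ A, 6 ∣ G.flow σ {v} - G.demand v) ∧
    6 ∣ G.excess A - G.flow σ A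

lemma Solves.solvesOutside (hG : G.Balanced) (hA : A ⊆ G.verts) (ha : a ∈ A)
    (hσ : (G.contract A a).Solves σ) : G.SolvesOutside A σ := by
  obtain ⟨hσ, hflow⟩ := hσ
  refine ⟨fun e he hr => hσ e he ((isRootEdge_contract hA ha hG.root_notMem).2 hr),
    fun v hv => ?_, ?_⟩
  · have hv' : v ∈ (G.contract A a).verts := mem_insert_of_mem hv
    have hvA : v ∉ A := (mem_sdiff.1 hv).2
    have := hflow v hv'
    rwa [flow_contract (singleton_subset_iff.2 hv'), expand_singleton_of_notMem ha hvA,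
      contract_demand, Function.update_of_ne (ne_of_mem_of_not_mem ha hvA).symm] at this
  · have ha' : a ∈ (G.contract A a).verts := mem_insert_self _ _
    have := hflow a ha'
    rw [flow_contract (singleton_subset_iff.2 ha'), expand_singleton_self ha,
      contract_demand, Function.update_self] at this
    omega

lemma Solvable.of_solvesOutside (hG : G.Balanced) (hA : A ⊆ G.verts) (hσ : G.SolvesOutside A σ)
    (hs : ((G.reorient σ).restrict A).Solvable) : G.Solvable := by
  refine .of_reorient hσ.1 (.of_restrict (hG.reorient hσ.1) hA (fun v hv => ?_) hs)
  rw [flow_reorient, one_mul]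
  exact hσ.2.1 v hv

lemma SolvesOutside.balanced_restrict (hG : G.Balanced) (hA : A ⊆ G.verts)
    (hσ : G.SolvesOutside A σ) : ((G.reorient σ).restrict A).Balanced := by
  refine (hG.reorient hσ.1).restrict hA ?_
  rw [flow_reorient, one_mul]
  exact hσ.2.2

lemma FixesRoot.solvesOutside_erase (hG : G.Balanced) (hσ : G.FixesRoot σ) (hv : v ∈ G.verts)
    (h : 6 ∣ G.flow σ {v} - G.demand v) : G.SolvesOutside (G.verts.erase v) σ := by
  refine ⟨hσ, fun w hw => ?_, ?_⟩
  · obtain rfl : w = v := by grind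
    exact h
  · have h₁ := hG.six_dvd
    have h₂ := sum_erase_add G.verts (fun w => G.flow σ {w}) hv
    rw [sum_flow_singleton, sum_flow_singleton, hσ.flow_eq hG] at h₂
    rw [excess_erase hv]
    omega

omit [DecidableEq V] in
lemma FixesRoot.one : G.FixesRoot 1 := fun _ _ _ => rfl

lemma Balanced.restrict_erase (hG : G.Balanced) (hv : v ∈ G.verts)
    (h : 6 ∣ G.flow 1 {v} - G.demand v) : (G.restrict (G.verts.erase v)).Balanced :=
  hG.restrict (erase_subset v _) (FixesRoot.one.solvesOutside_erase hG hv h).2.2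

lemma Solvable.of_restrict_erase (hG : G.Balanced) (hv : v ∈ G.verts)
    (h : 6 ∣ G.flow 1 {v} - G.demand v) (hs : (G.restrict (G.verts.erase v)).Solvable) :
    G.Solvable :=
  hs.of_restrict hG (erase_subset v _) (FixesRoot.one.solvesOutside_erase hG hv h).2.1

end Operations

section EdgeOperations

variable {V E : Type*} [DecidableEq V] [DecidableEq E] (G : RootedGraph V E)

/-- Commit the edges of `K` to their reference orientation and delete them. -/
@[simps]
def deleteEdges (K : Finset E) : RootedGraph V E :=
  { G with
    edges := G.edges \ K
    demand := fun v => G.demand v - ∑ e ∈ K, G.cross {v} e }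

/-- Replace the path formed by `e₁` and `e₂` (where `tgt e₁ = src e₂`) by a single edge, which
keeps the name `e₁`. -/
@[simps]
def lift (e₁ e₂ : E) : RootedGraph V E :=
  { G with
    edges := G.edges.erase e₂
    tgt := Function.update G.tgt e₁ (G.tgt e₂) }

variable {G} {K : Finset E} {A : Finset V} {e e₁ e₂ : E} {σ : E → ℤˣ}

lemma deg_deleteEdges (hK : K ⊆ G.edges) :
    (G.deleteEdges K).deg A = G.deg A - ∑ e ∈ K, |G.cross A e| :=
  eq_sub_of_add_eq (sum_sdiff hK)

lemma flow_deleteEdges (hK : K ⊆ G.edges) :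
    (G.deleteEdges K).flow σ A = G.flow σ A - ∑ e ∈ K, σ e * G.cross A e :=
  eq_sub_of_add_eq (sum_sdiff hK)

lemma excess_deleteEdges : (G.deleteEdges K).excess A = G.excess A - ∑ e ∈ K, G.cross A e := by
  simp only [excess, deleteEdges_demand, sum_sub_distrib]
  rw [sum_comm]
  simp only [sum_cross_singleton]

lemma Balanced.deleteEdges (hG : G.Balanced) (hK : K ⊆ G.edges) : (G.deleteEdges K).Balanced where
  root_notMem := hG.root_notMem
  src_mem e he := hG.src_mem e (mem_sdiff.1 he).1
  tgt_mem e he := hG.tgt_mem e (mem_sdiff.1 he).1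
  two_dvd v hv := by
    rw [flow_deleteEdges hK]
    simpa using hG.two_dvd v hv
  six_dvd := by
    rw [flow_deleteEdges hK, excess_deleteEdges]
    simpa using hG.six_dvd

lemma Solvable.of_deleteEdges (hK : K ⊆ G.edges) (hs : (G.deleteEdges K).Solvable) :
    G.Solvable := by
  obtain ⟨σ, hσ, hflow⟩ := hs
  set τ : E → ℤˣ := fun e => if e ∈ K then 1 else σ e with hτ
  refine ⟨τ, fun e he hr => ?_, fun v hv => ?_⟩
  · by_cases heK : e ∈ K
    · exact if_pos heK
    · exact (if_neg heK).trans (hσ e (mem_sdiff.2 ⟨he, heK⟩) hr)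
  have hrest : (G.deleteEdges K).flow σ {v} = (G.deleteEdges K).flow τ {v} :=
    flow_congr fun e he _ => (if_neg (mem_sdiff.1 he).2).symm
  have hsum : ∑ e ∈ K, (τ e : ℤ) * G.cross {v} e = ∑ e ∈ K, G.cross {v} e :=
    sum_congr rfl fun e he => by simp [hτ, he]
  have := hflow v hv
  rw [hrest, flow_deleteEdges hK, hsum, deleteEdges_demand] at this
  omega

lemma cross_lift_self (h : G.tgt e₁ = G.src e₂) :
    (G.lift e₁ e₂).cross A e₁ = G.cross A e₁ + G.cross A e₂ := by
  simp [cross, h]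

lemma cross_lift_of_ne (h : e ≠ e₁) : (G.lift e₁ e₂).cross A e = G.cross A e := by
  simp [cross, h]

lemma deg_lift (he₁ : e₁ ∈ G.edges) (he₂ : e₂ ∈ G.edges) (hne : e₁ ≠ e₂)
    (h : G.tgt e₁ = G.src e₂) :
    (G.lift e₁ e₂).deg A =
      G.deg A - |G.cross A e₁| - |G.cross A e₂| + |G.cross A e₁ + G.cross A e₂| := by
  have he₁' : e₁ ∈ G.edges.erase e₂ := mem_erase.2 ⟨hne, he₁⟩
  rw [deg, deg, lift_edges, ← add_sum_erase _ _ he₂, ← add_sum_erase _ _ he₁',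
    ← add_sum_erase _ _ he₁', cross_lift_self h,
    sum_congr rfl fun e he => by rw [cross_lift_of_ne (mem_erase.1 he).1]]
  ring

lemma flow_lift (he₁ : e₁ ∈ G.edges) (he₂ : e₂ ∈ G.edges) (hne : e₁ ≠ e₂)
    (h : G.tgt e₁ = G.src e₂) :
    (G.lift e₁ e₂).flow σ A = G.flow (Function.update σ e₂ (σ e₁)) A := by
  have he₁' : e₁ ∈ G.edges.erase e₂ := mem_erase.2 ⟨hne, he₁⟩
  rw [flow, flow, lift_edges, ← add_sum_erase _ _ he₂, ← add_sum_erase _ _ he₁',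
    ← add_sum_erase _ _ he₁', cross_lift_self h, Function.update_self,
    Function.update_of_ne hne, mul_add, add_comm (_ * _) (_ * _), add_assoc]
  congr 2
  refine sum_congr rfl fun e he => ?_
  rw [cross_lift_of_ne (mem_erase.1 he).1,
    Function.update_of_ne (mem_erase.1 (mem_erase.1 he).2).1]

lemma Balanced.lift (hG : G.Balanced) (he₁ : e₁ ∈ G.edges) (he₂ : e₂ ∈ G.edges) (hne : e₁ ≠ e₂)
    (h : G.tgt e₁ = G.src e₂) : (G.lift e₁ e₂).Balanced := by
  have hone : Function.update (1 : E → ℤˣ) e₂ ((1 : E → ℤˣ) e₁) = 1 := by simp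
  refine ⟨hG.root_notMem, fun e he => hG.src_mem e (mem_erase.1 he).2, fun e he => ?_,
    fun v hv => ?_, ?_⟩
  · have h₁ := hG.tgt_mem e (mem_erase.1 he).2
    have h₂ := hG.tgt_mem e₂ he₂
    grind [lift_tgt, lift_root, lift_verts]
  · rw [flow_lift he₁ he₂ hne h, hone]
    exact hG.two_dvd v hv
  · rw [flow_lift he₁ he₂ hne h, hone]
    exact hG.six_dvd

omit [DecidableEq V] in
/-- Orienting both edges of a path like the edge that replaced them. -/
lemma FixesRoot.of_lift (hne : e₁ ≠ e₂) (h : G.tgt e₁ = G.src e₂) (he₁ : e₁ ∈ G.edges)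
    (hroot : G.tgt e₁ ≠ G.root) (hσ : (G.lift e₁ e₂).FixesRoot σ) :
    G.FixesRoot (Function.update σ e₂ (σ e₁)) := by
  intro e he hr
  have he₁' := hσ e₁ (mem_erase.2 ⟨hne, he₁⟩)
  have he' : e ≠ e₂ → _ := fun hne₂ => hσ e (mem_erase.2 ⟨hne₂, he⟩)
  simp only [IsRootEdge, lift_src, lift_tgt, lift_root] at he₁' he' hr
  grind

lemma Solves.of_lift (he₁ : e₁ ∈ G.edges) (he₂ : e₂ ∈ G.edges) (hne : e₁ ≠ e₂)
    (h : G.tgt e₁ = G.src e₂) (hroot : G.tgt e₁ ≠ G.root) (hσ : (G.lift e₁ e₂).Solves σ) :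
    G.Solves (Function.update σ e₂ (σ e₁)) :=
  ⟨hσ.1.of_lift hne h he₁ hroot, fun v hv => flow_lift he₁ he₂ hne h ▸ hσ.2 v hv⟩

end EdgeOperations

section Base

variable {V E : Type*} [DecidableEq V] {G : RootedGraph V E} {u v : V} {σ : E → ℤˣ}

/-- The net flow out of `v` along its pre-oriented edges. -/
def rootFlow (G : RootedGraph V E) (v : V) : ℤ := ∑ e ∈ G.edges with G.IsRootEdge e, G.cross {v} e

lemma abs_rootFlow_le (v : V) : |G.rootFlow v| ≤ G.rootDeg v := abs_sum_le_sum_abs _ _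

lemma two_dvd_rootFlow_sub_rootDeg (v : V) : 2 ∣ G.rootFlow v - G.rootDeg v := by
  rw [rootFlow, rootDeg, ← sum_sub_distrib]
  refine dvd_sum fun e _ => ?_
  have := abs_cross_eq_zero_or_one (G := G) {v} e
  grind

lemma exists_flow_singleton_eq {k : ℤ} (hpar : 2 ∣ k - G.deg {v})
    (hk : |k - G.rootFlow v| ≤ G.deg {v} - G.rootDeg v) :
    ∃ σ, G.FixesRoot σ ∧ G.flow σ {v} = k := by
  set F : Finset E := {e ∈ G.edges | ¬G.IsRootEdge e ∧ |G.cross {v} e| = 1} with hF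
  have hmem : ∀ e, e ∈ F ↔ e ∈ G.edges ∧ ¬G.IsRootEdge e ∧ |G.cross {v} e| = 1 := by simp [hF]
  have hsplit : ∀ f : E → ℤ, (∀ e, G.cross {v} e = 0 → f e = 0) →
      ∑ e ∈ G.edges, f e = ∑ e ∈ G.edges with G.IsRootEdge e, f e + ∑ e ∈ F, f e := by
    intro f hf
    rw [← sum_filter_add_sum_filter_not G.edges G.IsRootEdge f]
    congr 1
    rw [hF, ← filter_filter]
    refine (sum_filter_of_ne fun e _ hne => ?_).symm
    exact (abs_cross_eq_zero_or_one _ _).resolve_left fun h => hne (hf e (abs_eq_zero.1 h))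
  have hcard : G.deg {v} = G.rootDeg v + #F := by
    rw [deg, hsplit _ fun e h => abs_eq_zero.2 h, sum_congr rfl fun e he => ((hmem e).1 he).2.2]
    simp [rootDeg]
  have hroot := two_dvd_rootFlow_sub_rootDeg (G := G) v
  obtain ⟨σ, hσ, hsum⟩ := exists_units_sum_mul_eq (fun e he => ((hmem e).1 he).2.2)
    (k := k - G.rootFlow v) (by omega) (by omega)
  have hfix : ∀ e, G.IsRootEdge e → σ e = 1 := fun e hr => hσ e fun he => ((hmem e).1 he).2.1 hr
  refine ⟨σ, fun e _ hr => hfix e hr, ?_⟩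
  rw [flow, hsplit _ fun e h => by simp [h], hsum, rootFlow,
    sum_congr rfl fun e he => by rw [hfix e (mem_filter.1 he).2, Units.val_one, one_mul]]
  ring

lemma Balanced.solvable_of_forall_erase (hG : G.Balanced) (hu : u ∈ G.verts) (hσ : G.FixesRoot σ)
    (h : ∀ v ∈ G.verts.erase u, 6 ∣ G.flow σ {v} - G.demand v) : G.Solvable := by
  refine ⟨σ, hσ, fun v hv => ?_⟩
  obtain rfl | hne := eq_or_ne v u
  · have h₁ := hG.six_dvd
    have h₂ := dvd_excess_sub_flow fun w hw => (dvd_sub_comm.1 (h w hw))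
    have h₃ := excess_erase (G := G) hu
    have h₄ := sum_erase_add G.verts (fun w => G.flow σ {w}) hu
    rw [sum_flow_singleton, sum_flow_singleton, hσ.flow_eq hG] at h₄
    omega
  · exact h v (mem_erase.2 ⟨hne, hv⟩)

lemma Good.le_deg_singleton (hG : G.Good) (hv : v ∈ G.verts) (hne : {v} ≠ G.verts) :
    4 + dist6 (G.demand v) ≤ G.deg {v} :=
  excess_singleton (G := G) v ▸
    hG.le_deg {v} (singleton_subset_iff.2 hv) (singleton_nonempty v) hne

/-- Two vertices are joined by at least two edges, whose signs realise every admissible residue. -/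
lemma Good.solvable_of_verts_eq_pair (hG : G.Good) (hne : u ≠ v) (h : G.verts = {u, v}) :
    G.Solvable := by
  have hu : u ∈ G.verts := by simp [h]
  have hv : v ∈ G.verts := by simp [h]
  have heu : G.verts.erase u = {v} := by grind
  have hroot := hG.root_le
  have hdeg := heu ▸ hG.deg_erase hu
  have hpar := excess_singleton (G := G) u ▸
    hG.two_dvd_excess_sub_deg (singleton_subset_iff.2 hu)
  have hex : G.excess G.verts = G.demand u + G.demand v := by rw [h]; exact sum_pair hne
  have htwo : 2 ≤ G.deg {u} - G.rootDeg u := by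
    have h₁ := hG.le_deg_singleton hu (by grind)
    have h₂ := hG.le_deg_singleton hv (by grind)
    rw [hex] at hroot
    unfold dist6 at *
    omega
  have hrootpar := two_dvd_rootFlow_sub_rootDeg (G := G) u
  obtain ⟨k, hk, hkd⟩ :=
    exists_abs_sub_le_and_six_dvd_sub (a := G.rootFlow u) (d := G.demand u) htwo (by omega)
  obtain ⟨σ, hσ, hflow⟩ := exists_flow_singleton_eq (by omega) hk
  refine hG.solvable_of_forall_erase hv hσ fun w hw => ?_
  obtain rfl : w = u := by grind
  rwa [hflow]

lemma Good.solvable_of_card_le_two (hG : G.Good) (h : #G.verts ≤ 2) : G.Solvable := by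
  obtain h₀ | ⟨v, hv⟩ := G.verts.eq_empty_or_nonempty
  · exact ⟨1, fun _ _ _ => rfl, by simp [h₀]⟩
  obtain h₁ | h₂ : #G.verts = 1 ∨ #G.verts = 2 := by have := card_pos.2 ⟨v, hv⟩; omega
  · obtain ⟨u, hu⟩ := card_eq_one.1 h₁
    exact hG.solvable_of_forall_erase hv (σ := 1) (fun _ _ _ => rfl) (by grind)
  · obtain ⟨u, w, hne, huw⟩ := card_eq_two.1 h₂
    exact hG.solvable_of_verts_eq_pair hne huw

end Base

/-! ### The Lovász–Thomassen–Wu–Zhang theorem -/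

section MinCounterexample

variable {V E : Type*} [DecidableEq V] {G : RootedGraph V E} {A B : Finset V} {v : V} {e : E}
  {σ : E → ℤˣ}

/-- The measure on which the Lovász–Thomassen–Wu–Zhang theorem is proved by induction. -/
def size (G : RootedGraph V E) : ℕ := #G.verts + #G.edges

/-- A counterexample of least size to the Lovász–Thomassen–Wu–Zhang theorem. -/
structure MinCounterexample (G : RootedGraph V E) : Prop where
  good : G.Good
  not_solvable : ¬G.Solvable
  solvable_of_size_lt : ∀ M : RootedGraph V E, M.Good → M.size < G.size → M.Solvable

lemma MinCounterexample.reorient (hG : G.MinCounterexample) (hσ : G.FixesRoot σ) :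
    (G.reorient σ).MinCounterexample where
  good := hG.good.reorient hσ
  not_solvable h := hG.not_solvable (.of_reorient hσ h)
  solvable_of_size_lt := hG.solvable_of_size_lt

lemma MinCounterexample.reverse (hG : G.MinCounterexample) : G.reverse.MinCounterexample where
  good := hG.good.reverse
  not_solvable h := hG.not_solvable (reverse_reverse (G := G) ▸ h.reverse)
  solvable_of_size_lt := hG.solvable_of_size_lt

lemma MinCounterexample.three_le_card (hG : G.MinCounterexample) : 3 ≤ #G.verts := by
  by_contra! h
  exact hG.not_solvable (hG.good.solvable_of_card_le_two (by omega))

lemma size_contract_lt {a : V} (hA : A ⊆ G.verts) (hcard : 2 ≤ #A) :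
    (G.contract A a).size < G.size := by
  have h₁ := card_insert_le a (G.verts \ A)
  have h₂ := card_sdiff_add_card_eq_card hA
  simp only [size, contract_verts, contract_edges]
  omega

lemma size_restrict_lt (hA : A ⊆ G.verts) (hne : A ≠ G.verts) : (G.restrict A).size < G.size :=
  Nat.add_lt_add_right (card_lt_card (hA.ssubset_of_ne hne)) _

lemma deg_restrict_reorient (hroot : G.root ∉ A) (hBA : B ⊆ A) :
    ((G.reorient σ).restrict A).deg B = G.deg B :=
  (deg_restrict (G := G.reorient σ) hroot hBA).trans deg_reorient

omit [DecidableEq V] in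
lemma excess_reorient : (G.reorient σ).excess A = G.excess A := rfl

lemma excess_restrict : (G.restrict A).excess B = G.excess B := rfl

/-- Otherwise the cut around `A` has the size a root may have: solve the graph with `A` contracted
and then the graph with the complement of `A` contracted. -/
lemma MinCounterexample.six_add_dist6_le_deg (hG : G.MinCounterexample) (hA : A ⊆ G.verts)
    (hcard : 2 ≤ #A) (hne : A ≠ G.verts) : 6 + dist6 (G.excess A) ≤ G.deg A := by
  by_contra! hlt
  have hbal := hG.good.toBalanced
  have hroot : G.root ∉ A := fun h => hbal.root_notMem (hA h)
  have hdeg : G.deg A ≤ 4 + dist6 (G.excess A) := by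
    have := hbal.two_dvd_excess_sub_deg hA
    unfold dist6 at *
    omega
  obtain ⟨a, ha⟩ := card_pos.1 (zero_lt_two.trans_le hcard)
  obtain ⟨σ, hσ⟩ := hG.solvable_of_size_lt _ (hG.good.contract hA ha) (size_contract_lt hA hcard)
  replace hσ := hσ.solvesOutside hbal hA ha
  have hgood : ((G.reorient σ).restrict A).Good :=
    { toBalanced := hσ.balanced_restrict hbal hA
      root_le := (deg_restrict_reorient hroot Subset.rfl).trans_le hdeg
      le_deg := fun B hB hne' _ => by
        rw [deg_restrict_reorient hroot hB, excess_restrict, excess_reorient]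
        exact hG.good.le_deg B (hB.trans hA) hne' fun h => hne (hA.antisymm (h ▸ hB)) }
  have hlt : ((G.reorient σ).restrict A).size < G.size :=
    size_restrict_lt (G := G.reorient σ) hA hne
  exact hG.not_solvable (.of_solvesOutside hbal hA hσ (hG.solvable_of_size_lt _ hgood hlt))

lemma MinCounterexample.six_add_dist6_le_deg_erase (hG : G.MinCounterexample) (hv : v ∈ G.verts) :
    6 + dist6 (G.excess G.verts - G.demand v) ≤ G.deg G.verts + G.deg {v} - 2 * G.rootDeg v := by
  rw [← hG.good.deg_erase hv, ← excess_erase hv]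
  refine hG.six_add_dist6_le_deg (erase_subset v _) ?_ fun h => notMem_erase v _ (h ▸ hv)
  have := hG.three_le_card
  rw [card_erase_of_mem hv]
  omega

/-- The edges leaving `A`. -/
def outEdges (G : RootedGraph V E) (A : Finset V) : Finset E := {e ∈ G.edges | G.cross A e = 1}

/-- The edges entering `A`. -/
def inEdges (G : RootedGraph V E) (A : Finset V) : Finset E := {e ∈ G.edges | G.cross A e = -1}

lemma two_mul_card_outEdges (A : Finset V) : 2 * #(G.outEdges A) = G.deg A + G.flow 1 A := by
  rw [outEdges, card_filter, deg, flow, ← sum_add_distrib, Nat.cast_sum, mul_sum]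
  refine sum_congr rfl fun e _ => ?_
  unfold cross; split_ifs <;> simp_all

lemma two_mul_card_inEdges (A : Finset V) : 2 * #(G.inEdges A) = G.deg A - G.flow 1 A := by
  rw [inEdges, card_filter, deg, flow, ← sum_sub_distrib, Nat.cast_sum, mul_sum]
  refine sum_congr rfl fun e _ => ?_
  unfold cross; split_ifs <;> simp_all

lemma cross_singleton_eq_one : G.cross {v} e = 1 ↔ G.src e = v ∧ G.tgt e ≠ v := by
  grind [cross]

lemma cross_singleton_eq_neg_one : G.cross {v} e = -1 ↔ G.tgt e = v ∧ G.src e ≠ v := by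
  grind [cross]

lemma deg_insert_of_deg_eq_zero (h : G.deg {v} = 0) : G.deg (insert v A) = G.deg A := by
  refine sum_congr rfl fun e he => ?_
  have := (sum_eq_zero_iff_of_nonneg fun _ _ => abs_nonneg _).1 h e he
  grind [cross]

lemma mem_inEdges_singleton : e ∈ G.inEdges {v} ↔ e ∈ G.edges ∧ G.tgt e = v ∧ G.src e ≠ v := by
  grind [inEdges, cross]

lemma mem_outEdges_singleton : e ∈ G.outEdges {v} ↔ e ∈ G.edges ∧ G.src e = v ∧ G.tgt e ≠ v := by
  grind [outEdges, cross]

end MinCounterexample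

section DegreeFour

variable {V E : Type*} [DecidableEq V] {G : RootedGraph V E} {A : Finset V} {v : V}
  {e₁ e₂ e₃ e₄ : E} {σ : E → ℤˣ}

/-- The edges `e₁` and `e₂` form a path through `v`. -/
structure IsPathThrough (G : RootedGraph V E) (v : V) (e₁ e₂ : E) : Prop where
  left_mem : e₁ ∈ G.edges
  right_mem : e₂ ∈ G.edges
  tgt_left : G.tgt e₁ = v
  src_right : G.src e₂ = v
  src_left_ne : G.src e₁ ≠ v
  tgt_right_ne : G.tgt e₂ ≠ v

omit [DecidableEq V] in
lemma IsPathThrough.ne (h : G.IsPathThrough v e₁ e₂) : e₁ ≠ e₂ := fun he =>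
  h.src_left_ne (he ▸ h.src_right)

omit [DecidableEq V] in
lemma IsPathThrough.tgt_eq_src (h : G.IsPathThrough v e₁ e₂) : G.tgt e₁ = G.src e₂ :=
  h.tgt_left.trans h.src_right.symm

lemma exists_isPathThrough (hpos : 0 < G.deg {v}) (hflow : G.flow 1 {v} = 0) :
    ∃ e₁ e₂, G.IsPathThrough v e₁ e₂ := by
  have hin := two_mul_card_inEdges (G := G) {v}
  have hout := two_mul_card_outEdges (G := G) {v}
  obtain ⟨e₁, h₁⟩ := card_pos.1 (show 0 < #(G.inEdges {v}) by omega)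
  obtain ⟨e₂, h₂⟩ := card_pos.1 (show 0 < #(G.outEdges {v}) by omega)
  obtain ⟨h₁, htgt, hsrc⟩ := mem_inEdges_singleton.1 h₁
  obtain ⟨h₂, hsrc', htgt'⟩ := mem_outEdges_singleton.1 h₂
  exact ⟨e₁, e₂, h₁, h₂, htgt, hsrc', hsrc, htgt'⟩

variable [DecidableEq E]

lemma Balanced.lift_path (hG : G.Balanced) (h : G.IsPathThrough v e₁ e₂) :
    (G.lift e₁ e₂).Balanced :=
  hG.lift h.left_mem h.right_mem h.ne h.tgt_eq_src

lemma Solves.of_lift_path (hv : v ≠ G.root) (h : G.IsPathThrough v e₁ e₂)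
    (hσ : (G.lift e₁ e₂).Solves σ) : G.Solves (Function.update σ e₂ (σ e₁)) :=
  hσ.of_lift h.left_mem h.right_mem h.ne h.tgt_eq_src (h.tgt_left ▸ hv)

lemma Solvable.of_lift_path (hv : v ≠ G.root) (h : G.IsPathThrough v e₁ e₂)
    (hs : (G.lift e₁ e₂).Solvable) : G.Solvable :=
  let ⟨_, hσ⟩ := hs
  ⟨_, hσ.of_lift_path hv h⟩

omit [DecidableEq V] in
lemma excess_lift : (G.lift e₁ e₂).excess A = G.excess A := rfl

lemma IsPathThrough.deg_lift_le (h : G.IsPathThrough v e₁ e₂) :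
    (G.lift e₁ e₂).deg A ≤ G.deg A := by
  have := abs_add_le (G.cross A e₁) (G.cross A e₂)
  rw [deg_lift h.left_mem h.right_mem h.ne h.tgt_eq_src]
  omega

lemma IsPathThrough.deg_sub_two_le (h : G.IsPathThrough v e₁ e₂) :
    G.deg A - 2 ≤ (G.lift e₁ e₂).deg A := by
  have h₁ := abs_cross_le_one (G := G) A e₁
  have h₂ := abs_cross_le_one (G := G) A e₂
  have h₃ := abs_nonneg (G.cross A e₁ + G.cross A e₂)
  rw [deg_lift h.left_mem h.right_mem h.ne h.tgt_eq_src]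
  omega

lemma IsPathThrough.deg_lift_singleton_of_ne {w : V} (h : G.IsPathThrough v e₁ e₂) (hw : w ≠ v)
    (hne : G.src e₁ ≠ G.tgt e₂) : (G.lift e₁ e₂).deg {w} = G.deg {w} := by
  have h₁ := h.tgt_left
  have h₂ := h.src_right
  rw [deg_lift h.left_mem h.right_mem h.ne h.tgt_eq_src]
  grind [cross]

lemma IsPathThrough.deg_lift_singleton (h : G.IsPathThrough v e₁ e₂) :
    (G.lift e₁ e₂).deg {v} = G.deg {v} - 2 := by
  rw [deg_lift h.left_mem h.right_mem h.ne h.tgt_eq_src,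
    cross_singleton_eq_neg_one.2 ⟨h.tgt_left, h.src_left_ne⟩,
    cross_singleton_eq_one.2 ⟨h.src_right, h.tgt_right_ne⟩]
  norm_num
  ring

lemma IsPathThrough.flow_one_lift (h : G.IsPathThrough v e₁ e₂) :
    (G.lift e₁ e₂).flow 1 A = G.flow 1 A := by
  rw [flow_lift h.left_mem h.right_mem h.ne h.tgt_eq_src]
  simp

/-- Lifting shrinks the first cut only if both far ends of the path lie in `A`, and the second only
if both lie outside. -/
lemma IsPathThrough.deg_add_deg_insert_le (h : G.IsPathThrough v e₁ e₂) (hv : v ∉ A) :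
    G.deg A + G.deg (insert v A) ≤
      (G.lift e₁ e₂).deg A + (G.lift e₁ e₂).deg (insert v A) + 2 := by
  have h₁ := h.tgt_left
  have h₂ := h.src_right
  rw [deg_lift h.left_mem h.right_mem h.ne h.tgt_eq_src,
    deg_lift h.left_mem h.right_mem h.ne h.tgt_eq_src]
  grind [cross]

lemma deg_lift_lift_singleton (h4 : G.deg {v} = 4) (h : G.IsPathThrough v e₁ e₂)
    (h' : (G.lift e₁ e₂).IsPathThrough v e₃ e₄) : ((G.lift e₁ e₂).lift e₃ e₄).deg {v} = 0 := by
  rw [h'.deg_lift_singleton, h.deg_lift_singleton]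
  omega

lemma deg_add_deg_insert_le_lift_lift (h4 : G.deg {v} = 4) (h : G.IsPathThrough v e₁ e₂)
    (h' : (G.lift e₁ e₂).IsPathThrough v e₃ e₄) (hv : v ∉ A) :
    G.deg A + G.deg (insert v A) ≤ 2 * ((G.lift e₁ e₂).lift e₃ e₄).deg A + 4 := by
  have h₁ := h.deg_add_deg_insert_le hv
  have h₂ := h'.deg_add_deg_insert_le hv
  rw [deg_insert_of_deg_eq_zero (deg_lift_lift_singleton h4 h h')] at h₂
  omega

lemma MinCounterexample.good_restrict_lift_lift (hG : G.MinCounterexample) (hv : v ∈ G.verts)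
    (h4 : G.deg {v} = 4) (h6 : 6 ∣ G.demand v) (h : G.IsPathThrough v e₁ e₂)
    (h' : (G.lift e₁ e₂).IsPathThrough v e₃ e₄)
    (hbal : (((G.lift e₁ e₂).lift e₃ e₄).restrict (G.verts.erase v)).Balanced) :
    (((G.lift e₁ e₂).lift e₃ e₄).restrict (G.verts.erase v)).Good := by
  have hroot : ((G.lift e₁ e₂).lift e₃ e₄).root ∉ G.verts.erase v := hbal.root_notMem
  refine { toBalanced := hbal, root_le := ?_, le_deg := fun B hB hne hBA => ?_ }
  · have hroot_le := hG.good.root_le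
    have hins := deg_insert_of_deg_eq_zero (A := G.verts.erase v) (deg_lift_lift_singleton h4 h h')
    rw [insert_erase hv] at hins
    calc
      _ = ((G.lift e₁ e₂).lift e₃ e₄).deg G.verts :=
        (deg_restrict hroot Subset.rfl).trans hins.symm
      _ ≤ 4 + dist6 (G.excess G.verts) := (h'.deg_lift_le.trans h.deg_lift_le).trans hroot_le
      _ = 4 + dist6 (G.excess (G.verts.erase v)) := by
        rw [excess_erase hv, dist6_congr (y := G.excess G.verts - G.demand v) (by simpa using h6)]
  · have hvB : v ∉ B := fun h => notMem_erase v G.verts (hB h)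
    have hBG : B ⊆ G.verts := hB.trans (erase_subset v _)
    have hcut := hG.good.le_deg B hBG hne fun h => hvB (h ▸ hv)
    have hcut' := hG.six_add_dist6_le_deg (insert_subset hv hBG)
      (by rw [card_insert_of_notMem hvB]; have := card_pos.2 hne; omega)
      fun h => hBA (by rw [restrict_verts, ← h, erase_insert hvB])
    have hexcess : G.excess (insert v B) = G.demand v + G.excess B := sum_insert hvB
    have hdist : dist6 (G.excess (insert v B)) = dist6 (G.excess B) :=
      dist6_congr (by simpa [hexcess] using h6)
    have hsum := deg_add_deg_insert_le_lift_lift h4 h h' hvB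
    have hpar := hbal.two_dvd_excess_sub_deg hB
    rw [deg_restrict hroot hB, excess_restrict, excess_lift, excess_lift] at hpar ⊢
    unfold dist6 at *
    omega

omit [DecidableEq E]

lemma MinCounterexample.flow_ne_zero (hG : G.MinCounterexample) (hv : v ∈ G.verts)
    (h4 : G.deg {v} = 4) (h6 : 6 ∣ G.demand v) : G.flow 1 {v} ≠ 0 := by
  classical
  intro h0
  have hbal := hG.good.toBalanced
  have hvroot : v ≠ G.root := ne_of_mem_of_not_mem hv hbal.root_notMem
  obtain ⟨e₁, e₂, h⟩ := exists_isPathThrough (h4 ▸ four_pos) h0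
  obtain ⟨e₃, e₄, h'⟩ := exists_isPathThrough (G := G.lift e₁ e₂) (v := v)
    (by rw [h.deg_lift_singleton]; omega) (by rwa [h.flow_one_lift])
  have hHbal := (hbal.lift_path h).lift_path h'
  have hflow : 6 ∣ ((G.lift e₁ e₂).lift e₃ e₄).flow 1 {v} - G.demand v := by
    rw [h'.flow_one_lift, h.flow_one_lift, h0, zero_sub, dvd_neg]
    exact h6
  have hgood := hG.good_restrict_lift_lift hv h4 h6 h h' (hHbal.restrict_erase hv hflow)
  have hlt : (((G.lift e₁ e₂).lift e₃ e₄).restrict (G.verts.erase v)).size < G.size :=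
    add_lt_add_of_lt_of_le (card_erase_lt_of_mem hv)
      (card_le_card ((erase_subset _ _).trans (erase_subset _ _)))
  exact hG.not_solvable (.of_lift_path hvroot h (.of_lift_path hvroot h'
    (.of_restrict_erase hHbal hv hflow (hG.solvable_of_size_lt _ hgood hlt))))

lemma MinCounterexample.rootDeg_le_one (hG : G.MinCounterexample) (hv : v ∈ G.verts)
    (h4 : G.deg {v} = 4) (h6 : 6 ∣ G.demand v) : G.rootDeg v ≤ 1 := by
  have h₁ := hG.six_add_dist6_le_deg_erase hv
  have h₂ := hG.good.root_le
  have h₃ : dist6 (G.excess G.verts - G.demand v) = dist6 (G.excess G.verts) :=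
    dist6_congr (by simpa using h6)
  omega

/-- Otherwise such a vertex can be oriented with flow `0` and then split off. -/
lemma MinCounterexample.deg_ne_four (hG : G.MinCounterexample) (hv : v ∈ G.verts)
    (h6 : 6 ∣ G.demand v) : G.deg {v} ≠ 4 := by
  classical
  intro h4
  have h₁ := hG.rootDeg_le_one hv h4 h6
  have h₂ := abs_rootFlow_le (G := G) v
  obtain ⟨σ, hσ, hflow⟩ := exists_flow_singleton_eq (G := G) (v := v) (k := 0) (by omega)
    (by rw [zero_sub, abs_neg]; omega)
  exact (hG.reorient hσ).flow_ne_zero hv (deg_reorient.trans h4) h6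
    (by rw [flow_reorient, one_mul, hflow])

end DegreeFour

section Tight

variable {V E : Type*} [DecidableEq V] {G : RootedGraph V E} {A : Finset V} {v : V} {e : E}
  {σ : E → ℤˣ}

/-- Deleting an edge that leaves `v` preserves the cut condition at `v`. -/
def CanLoseOut (G : RootedGraph V E) (v : V) : Prop := 4 + dist6 (G.demand v - 1) ≤ G.deg {v} - 1

/-- Deleting an edge that enters `v` preserves the cut condition at `v`. -/
def CanLoseIn (G : RootedGraph V E) (v : V) : Prop := 4 + dist6 (G.demand v + 1) ≤ G.deg {v} - 1

/-- The vertices of a minimal counterexample which cannot lose an edge entering them: the cut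
condition is tight, and the demand is `1` or `2` modulo `6`. -/
def IsPosTight (G : RootedGraph V E) (v : V) : Prop :=
  G.deg {v} = 4 + G.demand v % 6 ∧ (G.demand v % 6 = 1 ∨ G.demand v % 6 = 2)

/-- The vertices of a minimal counterexample which cannot lose an edge leaving them. -/
def IsNegTight (G : RootedGraph V E) (v : V) : Prop :=
  G.deg {v} = 4 + -G.demand v % 6 ∧ (-G.demand v % 6 = 1 ∨ -G.demand v % 6 = 2)

lemma IsPosTight.canLoseOut (h : G.IsPosTight v) : G.CanLoseOut v := by
  unfold IsPosTight CanLoseOut dist6 at *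
  omega

lemma IsPosTight.not_isNegTight (h : G.IsPosTight v) : ¬G.IsNegTight v := by
  unfold IsPosTight IsNegTight at *
  omega

lemma canLoseIn_reverse : G.reverse.CanLoseIn v ↔ G.CanLoseOut v := by
  rw [CanLoseIn, CanLoseOut, deg_reverse, reverse_demand, Pi.neg_apply, ← dist6_neg,
    neg_add, neg_neg, ← sub_eq_add_neg]

lemma isPosTight_reverse : G.reverse.IsPosTight v ↔ G.IsNegTight v := by
  rw [IsPosTight, IsNegTight, deg_reverse, reverse_demand, Pi.neg_apply]

lemma isPosTight_reorient : (G.reorient σ).IsPosTight v ↔ G.IsPosTight v := by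
  rw [IsPosTight, IsPosTight, deg_reorient, reorient_demand]

lemma isNegTight_reorient : (G.reorient σ).IsNegTight v ↔ G.IsNegTight v := by
  rw [IsNegTight, IsNegTight, deg_reorient, reorient_demand]

lemma MinCounterexample.singleton_ne (hG : G.MinCounterexample) : {v} ≠ G.verts := fun h => by
  have := h ▸ hG.three_le_card
  simp at this

lemma MinCounterexample.isPosTight_of_not_canLoseIn (hG : G.MinCounterexample) (hv : v ∈ G.verts)
    (h : ¬G.CanLoseIn v) : G.IsPosTight v := by
  have hdeg := hG.good.le_deg_singleton hv hG.singleton_ne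
  have hne := hG.deg_ne_four hv
  have hpar := hG.good.two_dvd_excess_sub_deg (singleton_subset_iff.2 hv)
  rw [excess_singleton] at hpar
  unfold CanLoseIn IsPosTight dist6 at *
  omega

lemma MinCounterexample.isNegTight_of_not_canLoseOut (hG : G.MinCounterexample) (hv : v ∈ G.verts)
    (h : ¬G.CanLoseOut v) : G.IsNegTight v :=
  isPosTight_reverse.1 (hG.reverse.isPosTight_of_not_canLoseIn hv (mt canLoseIn_reverse.1 h))

lemma MinCounterexample.le_deg_sub_abs {c : ℤ} (hG : G.MinCounterexample) (hA : A ⊆ G.verts)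
    (hne : A.Nonempty) (hAG : A ≠ G.verts) (hc : |c| ≤ 1)
    (hsingle : ∀ v, A = {v} → 4 + dist6 (G.demand v - c) ≤ G.deg {v} - |c|) :
    4 + dist6 (G.excess A - c) ≤ G.deg A - |c| := by
  obtain ⟨v, rfl⟩ | hcard : (∃ v, A = {v}) ∨ 2 ≤ #A := by
    have := card_pos.2 hne
    by_cases h : #A = 1
    exacts [.inl (card_eq_one.1 h), .inr (by omega)]
  · exact excess_singleton (G := G) v ▸ hsingle v rfl
  · have := hG.six_add_dist6_le_deg hA hcard hAG
    unfold dist6 at *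
    grind

variable [DecidableEq E]

lemma size_deleteEdges_lt {K : Finset E} (hK : K ⊆ G.edges) (hne : K.Nonempty) :
    (G.deleteEdges K).size < G.size :=
  Nat.add_lt_add_left (card_lt_card (sdiff_ssubset hK hne)) _

lemma MinCounterexample.good_deleteEdges_singleton (hG : G.MinCounterexample) (he : e ∈ G.edges)
    (hsrc : G.src e ∈ G.verts → G.CanLoseOut (G.src e))
    (htgt : G.tgt e ∈ G.verts → G.CanLoseIn (G.tgt e)) : (G.deleteEdges {e}).Good := by
  have he' := singleton_subset_iff.2 he
  refine { toBalanced := hG.good.toBalanced.deleteEdges he', root_le := ?_, le_deg := ?_ }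
  · have h₁ := hG.good.root_le
    have h₂ := abs_cross_eq_zero_or_one (G := G) G.verts e
    rw [deg_deleteEdges he', excess_deleteEdges, sum_singleton, sum_singleton, deleteEdges_verts]
    unfold dist6 at *
    grind
  · intro A hA hne hAG
    rw [deg_deleteEdges he', excess_deleteEdges, sum_singleton, sum_singleton]
    refine hG.le_deg_sub_abs hA hne hAG (abs_cross_le_one A e) ?_
    rintro v rfl
    have hv : v ∈ G.verts := singleton_subset_iff.1 hA
    have hdeg := hG.good.le_deg_singleton hv hG.singleton_ne
    obtain h | h | h : G.cross {v} e = 0 ∨ G.cross {v} e = 1 ∨ G.cross {v} e = -1 := by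
      grind [cross]
    · simpa [h] using hdeg
    · obtain rfl := (cross_singleton_eq_one.1 h).1
      simpa [h, CanLoseOut] using hsrc hv
    · obtain rfl := (cross_singleton_eq_neg_one.1 h).1
      simpa [h, CanLoseIn] using htgt hv

omit [DecidableEq E]

/-- Otherwise `e` could be deleted. -/
lemma MinCounterexample.isNegTight_src_or_isPosTight_tgt (hG : G.MinCounterexample)
    (he : e ∈ G.edges) :
    (G.src e ∈ G.verts ∧ G.IsNegTight (G.src e)) ∨
      (G.tgt e ∈ G.verts ∧ G.IsPosTight (G.tgt e)) := by
  classical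
  by_contra! h
  have he' := singleton_subset_iff.2 he
  have hgood := hG.good_deleteEdges_singleton he
    (fun hv => by_contra fun hn => h.1 hv (hG.isNegTight_of_not_canLoseOut hv hn))
    (fun hv => by_contra fun hn => h.2 hv (hG.isPosTight_of_not_canLoseIn hv hn))
  exact hG.not_solvable (.of_deleteEdges he'
    (hG.solvable_of_size_lt _ hgood (size_deleteEdges_lt he' (singleton_nonempty e))))

lemma MinCounterexample.isPosTight_or_isNegTight_of_edge (hG : G.MinCounterexample)
    (he : e ∈ G.edges) (hr : ¬G.IsRootEdge e) :
    (G.IsPosTight (G.src e) ∧ G.IsPosTight (G.tgt e)) ∨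
      (G.IsNegTight (G.src e) ∧ G.IsNegTight (G.tgt e)) := by
  classical
  have hσ : G.FixesRoot (Function.update 1 e (-1)) := fun e' _ hr' => by
    rw [Function.update_of_ne (by rintro rfl; exact hr hr'), Pi.one_apply]
  have h := hG.isNegTight_src_or_isPosTight_tgt he
  have h' := (hG.reorient hσ).isNegTight_src_or_isPosTight_tgt he
  simp only [isPosTight_reorient, isNegTight_reorient, reorient_src, reorient_tgt, reorient_verts,
    Function.update_self, show ¬(-1 : ℤˣ) = 1 by decide, if_false] at h'
  have hsrc := IsPosTight.not_isNegTight (G := G) (v := G.src e)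
  have htgt := IsPosTight.not_isNegTight (G := G) (v := G.tgt e)
  grind

lemma MinCounterexample.isPosTight_or_isNegTight (hG : G.MinCounterexample) (hv : v ∈ G.verts) :
    G.IsPosTight v ∨ G.IsNegTight v := by
  have hdeg := hG.good.le_deg_singleton hv hG.singleton_ne
  obtain ⟨e, he, hcross⟩ := exists_abs_cross_eq_one (G := G) (A := {v}) (by
    unfold dist6 at hdeg
    omega)
  have hend : G.src e = v ∨ G.tgt e = v := by grind [cross]
  have hroot := hG.good.root_notMem
  by_cases hr : G.IsRootEdge e
  · have := hG.isNegTight_src_or_isPosTight_tgt he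
    grind [IsRootEdge]
  · have := hG.isPosTight_or_isNegTight_of_edge he hr
    grind

/-- No edge joins a positive to a negative vertex, so if both kinds were present then the cuts
around them would add up to the one at the root. -/
lemma MinCounterexample.forall_isPosTight_or_forall_isNegTight (hG : G.MinCounterexample) :
    (∀ v ∈ G.verts, G.IsPosTight v) ∨ ∀ v ∈ G.verts, G.IsNegTight v := by
  classical
  by_contra! h
  obtain ⟨⟨q, hq, hqpos⟩, p, hp, hpneg⟩ := h
  set P := {v ∈ G.verts | G.IsPosTight v} with hP
  have hpP : p ∈ P := mem_filter.2 ⟨hp, (hG.isPosTight_or_isNegTight hp).resolve_right hpneg⟩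
  have hqP : q ∉ P := fun h => hqpos (mem_filter.1 h).2
  have hPsub : P ⊆ G.verts := filter_subset _ _
  have hsum : G.deg P + G.deg (G.verts \ P) ≤ G.deg G.verts := by
    rw [deg, deg, deg, ← sum_add_distrib]
    refine sum_le_sum fun e he => ?_
    have h₁ := hG.good.src_mem e he
    have h₂ := hG.good.tgt_mem e he
    have h₃ := hG.good.root_notMem
    have hmem : ∀ v ∈ G.verts, v ∈ P ↔ G.IsPosTight v := by simp +contextual [hP]
    by_cases hr : G.IsRootEdge e
    · grind [cross, IsRootEdge]
    · have := fun v => IsPosTight.not_isNegTight (G := G) (v := v)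
      have := hG.isPosTight_or_isNegTight_of_edge he hr
      grind [cross, IsRootEdge]
  have h₁ := hG.good.le_deg P hPsub ⟨p, hpP⟩ fun h => hqP (h ▸ hq)
  have h₂ := hG.good.le_deg (G.verts \ P) sdiff_subset ⟨q, mem_sdiff.2 ⟨hq, hqP⟩⟩
    fun h => (mem_sdiff.1 (h ▸ hp)).2 hpP
  have h₃ := hG.good.root_le
  have h₄ : G.excess (G.verts \ P) + G.excess P = G.excess G.verts := sum_sdiff hPsub
  unfold dist6 at *
  omega

end Tight

section Positive

variable {V E : Type*} [DecidableEq V] {G : RootedGraph V E} {A B : Finset V} {v : V}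
  {e e₁ e₂ : E} {σ : E → ℤˣ}

/-- A minimal counterexample whose vertices are all positively tight. -/
structure PosCounterexample (G : RootedGraph V E) : Prop extends G.MinCounterexample where
  isPosTight : ∀ v ∈ G.verts, G.IsPosTight v

lemma MinCounterexample.exists_posCounterexample (hG : G.MinCounterexample) :
    ∃ H : RootedGraph V E, H.PosCounterexample := by
  obtain h | h := hG.forall_isPosTight_or_forall_isNegTight
  · exact ⟨G, hG, h⟩
  · exact ⟨G.reverse, hG.reverse, fun v hv => isPosTight_reverse.2 (h v hv)⟩

namespace PosCounterexample

lemma reorient (hG : G.PosCounterexample) (hσ : G.FixesRoot σ) :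
    (G.reorient σ).PosCounterexample where
  toMinCounterexample := hG.toMinCounterexample.reorient hσ
  isPosTight v hv := isPosTight_reorient.2 (hG.isPosTight v hv)

lemma tgt_mem (hG : G.PosCounterexample) (he : e ∈ G.edges) : G.tgt e ∈ G.verts := by
  have := hG.isNegTight_src_or_isPosTight_tgt he
  have := fun hv => (hG.isPosTight (G.src e) hv).not_isNegTight
  grind

lemma flow_one_verts (hG : G.PosCounterexample) : G.flow 1 G.verts = -G.deg G.verts := by
  rw [flow, deg, ← sum_neg_distrib]
  refine sum_congr rfl fun e he => ?_
  simp only [cross, hG.tgt_mem he, Pi.one_apply, Units.val_one]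
  split_ifs <;> simp

lemma rootFlow_eq (hG : G.PosCounterexample) (hv : v ∈ G.verts) : G.rootFlow v = -G.rootDeg v := by
  rw [rootFlow, rootDeg, ← sum_neg_distrib]
  refine sum_congr rfl fun e he => ?_
  obtain ⟨he, hr⟩ := mem_filter.1 he
  have h₁ := hG.tgt_mem he
  have h₂ := hG.good.root_notMem
  grind [cross, IsRootEdge]

lemma deg_verts_le_five (hG : G.PosCounterexample) : G.deg G.verts ≤ 5 := by
  have h₁ := hG.good.six_dvd
  have h₂ := hG.good.root_le
  rw [hG.flow_one_verts] at h₁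
  unfold dist6 at h₂
  omega

lemma deg_verts_pos (hG : G.PosCounterexample) : 0 < G.deg G.verts := by
  have hcard := hG.three_le_card
  obtain ⟨v, hv⟩ := card_pos.1 (show 0 < #G.verts by omega)
  have h₁ := hG.good.six_dvd
  have h₂ := hG.six_add_dist6_le_deg_erase hv
  have h₃ := hG.isPosTight v hv
  have h₄ := rootDeg_nonneg (G := G) v
  rw [hG.flow_one_verts] at h₁
  unfold IsPosTight dist6 at *
  omega

end PosCounterexample

/-- The end outside `A` of an edge in the cut around `A`. -/
def farEnd (G : RootedGraph V E) (A : Finset V) (e : E) : V :=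
  if G.src e ∈ A then G.tgt e else G.src e

lemma PosCounterexample.exists_farEnd_ne (hG : G.PosCounterexample) (hA : A ⊆ G.verts)
    (hdeg : 6 ≤ G.deg A) :
    ∃ e₁ ∈ G.edges, ∃ e₂ ∈ G.edges, |G.cross A e₁| = 1 ∧ |G.cross A e₂| = 1 ∧
      G.farEnd A e₁ ≠ G.farEnd A e₂ := by
  by_contra! h
  obtain ⟨e₀, he₀, hc₀⟩ := exists_abs_cross_eq_one (show 0 < G.deg A by omega)
  have hfar : ∀ e ∈ G.edges, |G.cross A e| = 1 → G.farEnd A e = G.farEnd A e₀ :=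
    fun e he hc => h e he e₀ he₀ hc hc₀
  have hle := hG.deg_verts_le_five
  by_cases hroot : G.farEnd A e₀ = G.root
  · have : G.deg A ≤ G.deg G.verts := sum_le_sum fun e he => by
      have h₁ := hfar e he
      have h₂ := hG.tgt_mem he
      have h₃ := hG.good.root_notMem
      grind [cross, farEnd]
    omega
  · set y := G.farEnd A e₀
    have hyG : y ∈ G.verts := by
      have h₁ := hG.good.src_mem e₀ he₀
      have h₂ := hG.good.tgt_mem e₀ he₀
      grind [farEnd]
    have hsum : G.deg (insert y A) + G.deg A ≤ G.deg {y} := by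
      rw [deg, deg, deg, ← sum_add_distrib]
      refine sum_le_sum fun e he => ?_
      have h₁ := hfar e he
      grind [cross, farEnd]
    have hpos : 0 < G.deg (insert y A) := by
      by_cases hV : insert y A = G.verts
      · exact hV ▸ hG.deg_verts_pos
      · have := hG.good.le_deg _ (insert_subset hyG hA) (insert_nonempty y A) hV
        unfold dist6 at this
        omega
    have htight := hG.isPosTight y hyG
    unfold IsPosTight at htight
    omega

end Positive

section SharperCut

variable {V E : Type*} [DecidableEq V] [DecidableEq E] {G : RootedGraph V E} {A : Finset V}
  {a : V} {e₁ e₂ : E}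

omit [DecidableEq E] in
lemma isPathThrough_contract (he₁ : e₁ ∈ G.edges) (he₂ : e₂ ∈ G.edges) (ha : a ∈ A)
    (h₁ : G.cross A e₁ = -1) (h₂ : G.cross A e₂ = 1) :
    (G.contract A a).IsPathThrough a e₁ e₂ := by
  constructor <;> grind [cross, contract_src, contract_tgt, contract_edges]

lemma MinCounterexample.good_lift_contract (hG : G.MinCounterexample) (hA : A ⊆ G.verts)
    (hcard : 2 ≤ #A) (ha : a ∈ A) (he₁ : e₁ ∈ G.edges) (he₂ : e₂ ∈ G.edges)
    (h₁ : G.cross A e₁ = -1) (h₂ : G.cross A e₂ = 1) (hne : G.src e₁ ≠ G.tgt e₂) :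
    ((G.contract A a).lift e₁ e₂).Good := by
  have hC := hG.good.contract hA ha
  have hpath := isPathThrough_contract he₁ he₂ ha h₁ h₂
  refine { toBalanced := hC.toBalanced.lift_path hpath
           root_le := hpath.deg_lift_le.trans hC.root_le, le_deg := fun B hB hne' hBC => ?_ }
  by_cases hcard' : 2 ≤ #(expand A a B)
  · have hcut := hG.six_add_dist6_le_deg (expand_subset hA ha hB) hcard' (expand_ne hA ha hB hBC)
    have hdeg := hpath.deg_sub_two_le (A := B)
    rw [deg_contract hB] at hdeg
    rw [excess_lift, excess_contract ha hB]
    omega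
  · have haB : a ∉ B := fun h => hcard' (hcard.trans (card_le_card (by grind [expand])))
    rw [expand, if_neg haB] at hcard'
    obtain ⟨y, rfl⟩ := card_eq_one.1 (show #B = 1 by have := card_pos.2 hne'; omega)
    rw [hpath.deg_lift_singleton_of_ne (by grind) (by grind [cross, contract_src, contract_tgt])]
    exact hC.le_deg _ hB hne' hBC

omit [DecidableEq E] in
lemma MinCounterexample.exists_solvesOutside_of_path (hG : G.MinCounterexample) (hA : A ⊆ G.verts)
    (hcard : 2 ≤ #A) (he₁ : e₁ ∈ G.edges) (he₂ : e₂ ∈ G.edges)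
    (h₁ : G.cross A e₁ = -1) (h₂ : G.cross A e₂ = 1) (hne : G.src e₁ ≠ G.tgt e₂) :
    ∃ σ, G.SolvesOutside A σ ∧ σ e₁ = σ e₂ := by
  classical
  obtain ⟨a, ha⟩ := card_pos.1 (zero_lt_two.trans_le hcard)
  have hpath := isPathThrough_contract he₁ he₂ ha h₁ h₂
  have hlt : ((G.contract A a).lift e₁ e₂).size < G.size :=
    (Nat.add_le_add_left (card_le_card (erase_subset _ _)) _).trans_lt (size_contract_lt hA hcard)
  obtain ⟨σ, hσ⟩ := hG.solvable_of_size_lt _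
    (hG.good_lift_contract hA hcard ha he₁ he₂ h₁ h₂ hne) hlt
  have haroot : a ≠ (G.contract A a).root :=
    ne_of_mem_of_not_mem (hA ha) hG.good.root_notMem
  refine ⟨_, (hσ.of_lift_path haroot hpath).solvesOutside hG.good.toBalanced hA ha, ?_⟩
  rw [Function.update_self, Function.update_of_ne hpath.ne]

end SharperCut

section PositiveCuts

variable {V E : Type*} [DecidableEq V] {G : RootedGraph V E} {A B : Finset V} {v w : V}
  {e₁ e₂ : E} {K : Finset E} {σ : E → ℤˣ}

lemma cross_eq_zero_or_one_of_cross_eq_one {e : E} (h : G.cross A e = 1) (hB : B ⊆ A) :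
    G.cross B e = 0 ∨ G.cross B e = 1 := by
  grind [cross]

lemma PosCounterexample.good_deleteEdges_restrict [DecidableEq E] (hG : G.PosCounterexample)
    (hA : A ⊆ G.verts) (hAG : A ≠ G.verts) (hbal : (G.restrict A).Balanced) (hK : K ⊆ G.edges)
    (hcross : ∀ e ∈ K, G.cross A e = 1)
    (hroot_le : G.deg A - #K ≤ 4 + dist6 (G.excess A - #K))
    (hcut : ∀ B ⊆ A, 2 ≤ ∑ e ∈ K, G.cross B e →
      4 + dist6 (G.excess B - ∑ e ∈ K, G.cross B e) ≤ G.deg B - ∑ e ∈ K, G.cross B e) :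
    ((G.restrict A).deleteEdges K).Good := by
  have hroot : G.root ∉ A := fun h => hG.good.root_notMem (hA h)
  have hdeg : ∀ B ⊆ A, ((G.restrict A).deleteEdges K).deg B = G.deg B - ∑ e ∈ K, G.cross B e := by
    intro B hB
    rw [deg_deleteEdges (G := G.restrict A) hK, deg_restrict hroot hB]
    refine congrArg _ (sum_congr rfl fun e he => ?_)
    have := cross_eq_zero_or_one_of_cross_eq_one (hcross e he) hB
    rw [cross_restrict hroot hB, abs_of_nonneg (by omega)]
  have hexcess : ∀ B ⊆ A,
      ((G.restrict A).deleteEdges K).excess B = G.excess B - ∑ e ∈ K, G.cross B e := by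
    intro B hB
    rw [excess_deleteEdges, excess_restrict]
    exact congrArg _ (sum_congr rfl fun e _ => cross_restrict hroot hB)
  refine { toBalanced := hbal.deleteEdges hK, root_le := ?_, le_deg := fun B hB hne hBA => ?_ }
  · have hsum : ∑ e ∈ K, G.cross A e = #K := by simp [sum_congr rfl hcross]
    rwa [← hsum, ← hdeg A Subset.rfl, ← hexcess A Subset.rfl] at hroot_le
  · rw [hdeg B hB, hexcess B hB]
    have hnonneg : 0 ≤ ∑ e ∈ K, G.cross B e := sum_nonneg fun e he => by
      have := cross_eq_zero_or_one_of_cross_eq_one (hcross e he) hB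
      omega
    by_cases hκ : 2 ≤ ∑ e ∈ K, G.cross B e
    · exact hcut B hB hκ
    have hle := hG.le_deg_sub_abs (c := ∑ e ∈ K, G.cross B e) (hB.trans hA) hne
      (fun h => hAG (hA.antisymm (h ▸ hB))) (by rw [abs_of_nonneg hnonneg]; omega) ?_
    · rwa [abs_of_nonneg hnonneg] at hle
    rintro v rfl
    have hv : v ∈ G.verts := hA (singleton_subset_iff.1 hB)
    have h₀ := hG.good.le_deg_singleton hv hG.singleton_ne
    have h₁ := (hG.isPosTight v hv).canLoseOut
    obtain h | h : ∑ e ∈ K, G.cross {v} e = 0 ∨ ∑ e ∈ K, G.cross {v} e = 1 := by omega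
    · simpa [h] using h₀
    · simpa [h, CanLoseOut] using h₁

lemma PosCounterexample.false_of_cross_eq_one (hG : G.PosCounterexample) (hA : A ⊆ G.verts)
    (hAG : A ≠ G.verts) (hσ : G.SolvesOutside A σ) (he : e₁ ∈ G.edges)
    (hcross : (G.reorient σ).cross A e₁ = 1)
    (hdeg : G.deg A - 1 ≤ 4 + dist6 (G.excess A - 1)) : False := by
  classical
  have he' : {e₁} ⊆ G.edges := singleton_subset_iff.2 he
  have hgood := (hG.reorient hσ.1).good_deleteEdges_restrict hA hAG
    (hσ.balanced_restrict hG.good.toBalanced hA) (K := {e₁}) he' (by simpa using hcross)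
    (by simpa [deg_reorient, excess_reorient] using hdeg) fun B hB h => by
      have := cross_eq_zero_or_one_of_cross_eq_one hcross hB
      rw [sum_singleton] at h
      omega
  have hlt : ((G.reorient σ).restrict A).size < G.size :=
    size_restrict_lt (G := G.reorient σ) hA hAG
  have hlt' := (size_deleteEdges_lt (G := (G.reorient σ).restrict A) he'
    (singleton_nonempty e₁)).trans hlt
  exact hG.not_solvable (.of_solvesOutside hG.good.toBalanced hA hσ
    (.of_deleteEdges he' (hG.solvable_of_size_lt _ hgood hlt')))

lemma PosCounterexample.four_add_dist6_le_of_path (hG : G.PosCounterexample) (hA : A ⊆ G.verts)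
    (hcard : 2 ≤ #A) (hAG : A ≠ G.verts) (he₁ : e₁ ∈ G.edges) (he₂ : e₂ ∈ G.edges)
    (h₁ : G.cross A e₁ = -1) (h₂ : G.cross A e₂ = 1) (hne : G.src e₁ ≠ G.tgt e₂) :
    4 + dist6 (G.excess A - 2) ≤ G.deg A - 2 := by
  classical
  by_contra! hlt
  have hdeg : G.deg A - 1 ≤ 4 + dist6 (G.excess A - 1) := by
    have := hG.six_add_dist6_le_deg hA hcard hAG
    have := hG.good.two_dvd_excess_sub_deg hA
    unfold dist6 at *
    omega
  obtain ⟨σ, hσ, heq⟩ := hG.exists_solvesOutside_of_path hA hcard he₁ he₂ h₁ h₂ hne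
  rcases Int.units_eq_one_or (σ e₂) with h | h
  · exact hG.false_of_cross_eq_one hA hAG hσ he₂ (by simp [cross_reorient, h, h₂]) hdeg
  · exact hG.false_of_cross_eq_one hA hAG hσ he₁ (by simp [cross_reorient, heq, h, h₁]) hdeg

lemma PosCounterexample.exists_reorient_path (hG : G.PosCounterexample) (hA : A ⊆ G.verts)
    (hdeg : 6 ≤ G.deg A) :
    ∃ σ, G.FixesRoot σ ∧ ∃ e₁ ∈ G.edges, ∃ e₂ ∈ G.edges, (G.reorient σ).cross A e₁ = -1 ∧
      (G.reorient σ).cross A e₂ = 1 ∧ (G.reorient σ).src e₁ ≠ (G.reorient σ).tgt e₂ := by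
  classical
  obtain ⟨e₁, he₁, e₂, he₂, h₁, h₂, hne, hroot⟩ : ∃ e₁ ∈ G.edges, ∃ e₂ ∈ G.edges,
      |G.cross A e₁| = 1 ∧ |G.cross A e₂| = 1 ∧ G.farEnd A e₁ ≠ G.farEnd A e₂ ∧
        G.farEnd A e₂ ≠ G.root := by
    obtain ⟨e₁, he₁, e₂, he₂, h₁, h₂, hne⟩ := hG.exists_farEnd_ne hA hdeg
    by_cases h : G.farEnd A e₂ = G.root
    · exact ⟨e₂, he₂, e₁, he₁, h₂, h₁, hne.symm, h ▸ hne⟩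
    · exact ⟨e₁, he₁, e₂, he₂, h₁, h₂, hne, h⟩
  have hroot' : G.root ∉ A := fun h => hG.good.root_notMem (hA h)
  refine ⟨fun e => if e = e₁ ∧ G.cross A e = 1 ∨ e = e₂ ∧ G.cross A e = -1 then -1 else 1,
    fun e he hr => if_neg ?_, e₁, he₁, e₂, he₂, ?_, ?_, ?_⟩
  · have := hG.tgt_mem he
    have := hG.good.root_notMem
    grind [cross, farEnd, IsRootEdge]
  · rw [cross_reorient]
    grind [Units.val_neg, Units.val_one]
  · rw [cross_reorient]
    grind [Units.val_neg, Units.val_one]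
  · have : (-1 : ℤˣ) ≠ 1 := by decide
    grind [cross, farEnd, reorient_src, reorient_tgt]

lemma PosCounterexample.four_add_dist6_le (hG : G.PosCounterexample) (hA : A ⊆ G.verts)
    (hcard : 2 ≤ #A) (hAG : A ≠ G.verts) : 4 + dist6 (G.excess A - 2) ≤ G.deg A - 2 := by
  obtain ⟨σ, hσ, e₁, he₁, e₂, he₂, h₁, h₂, hne⟩ := hG.exists_reorient_path hA (by
    have := hG.six_add_dist6_le_deg hA hcard hAG
    unfold dist6 at this
    omega)
  have := (hG.reorient hσ).four_add_dist6_le_of_path hA hcard hAG he₁ he₂ h₁ h₂ hne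
  rwa [deg_reorient, excess_reorient] at this

end PositiveCuts

section RemoveVertex

variable {V E : Type*} [DecidableEq V] {G : RootedGraph V E} {B : Finset V} {v w : V}
  {K : Finset E}

lemma PosCounterexample.exists_rootDeg_pos (hG : G.PosCounterexample) :
    ∃ v ∈ G.verts, 1 ≤ G.rootDeg v := by
  obtain ⟨e, he, hcross⟩ := exists_abs_cross_eq_one hG.deg_verts_pos
  have htgt := hG.tgt_mem he
  have hroot := hG.good.root_notMem
  have hsrc := hG.good.src_mem e he
  have hr : G.IsRootEdge e := by grind [cross, IsRootEdge]
  refine ⟨G.tgt e, htgt, ?_⟩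
  have hle := single_le_sum (f := fun e' => |G.cross {G.tgt e} e'|) (fun _ _ => abs_nonneg _)
    (mem_filter.2 ⟨he, hr⟩)
  have : |G.cross {G.tgt e} e| = 1 := by grind [cross, IsRootEdge]
  exact this.symm.trans_le hle

lemma card_inEdges_singleton_le (v : V) :
    #(G.inEdges {v}) ≤ #{e ∈ G.inEdges {v} | ¬G.IsRootEdge e} + G.rootDeg v := by
  rw [← card_filter_add_card_filter_not (s := G.inEdges {v}) G.IsRootEdge, Nat.cast_add, add_comm,
    add_le_add_iff_left, rootDeg, card_eq_sum_ones, Nat.cast_sum]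
  refine (sum_le_sum fun e he => ?_).trans
    (sum_le_sum_of_subset_of_nonneg (t := {e ∈ G.edges | G.IsRootEdge e}) ?_
      fun _ _ _ => abs_nonneg (G.cross {v} _))
  · simp [(mem_filter.1 (mem_filter.1 he).1).2]
  · exact filter_subset_filter _ (filter_subset _ _)

/-- As `v` absorbs its demand modulo `6` with surplus inflow, there are enough edges to delete. -/
lemma PosCounterexample.exists_five_le_card_inEdges (hG : G.PosCounterexample)
    (hv : v ∈ G.verts) :
    ∃ σ, G.FixesRoot σ ∧ 6 ∣ G.flow σ {v} - G.demand v ∧ 5 ≤ #((G.reorient σ).inEdges {v}) := by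
  have htight := hG.isPosTight v hv
  have hle := hG.good.rootDeg_le hv
  have h5 := hG.deg_verts_le_five
  unfold IsPosTight at htight
  obtain ⟨σ, hσ, hflow⟩ := exists_flow_singleton_eq (G := G) (v := v) (k := G.demand v % 6 - 6)
    (by omega) (by rw [hG.rootFlow_eq hv, abs_le]; omega)
  refine ⟨σ, hσ, by omega, ?_⟩
  have := two_mul_card_inEdges (G := G.reorient σ) {v}
  rw [deg_reorient, flow_reorient, one_mul] at this
  omega

lemma deg_pair_add_le (hK : K ⊆ G.edges) (htgt : ∀ e ∈ K, G.tgt e = v) (hw : w ≠ v) :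
    G.deg {v, w} + 2 * ∑ e ∈ K, G.cross {w} e ≤ G.deg {v} + G.deg {w} := by
  classical
  rw [deg, deg, deg, ← sum_add_distrib, ← sum_sdiff hK, ← sum_sdiff hK, mul_sum, add_assoc,
    ← sum_add_distrib]
  refine add_le_add (sum_le_sum fun e _ => ?_) (sum_le_sum fun e he => ?_)
  · grind [cross]
  · have := htgt e he
    grind [cross]

lemma PosCounterexample.four_add_dist6_le_of_inEdges (hG : G.PosCounterexample) (hv : v ∈ G.verts)
    (hK : K ⊆ G.edges) (hcard : #K ≤ 2) (htgt : ∀ e ∈ K, G.tgt e = v) (hB : B ⊆ G.verts.erase v)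
    (hsum : 2 ≤ ∑ e ∈ K, G.cross B e) :
    4 + dist6 (G.excess B - ∑ e ∈ K, G.cross B e) ≤ G.deg B - ∑ e ∈ K, G.cross B e := by
  have hBG : B ⊆ G.verts := hB.trans (erase_subset v _)
  have hsum' : ∑ e ∈ K, G.cross B e = 2 := by
    have := sum_le_card_nsmul K (fun e => G.cross B e) 1 fun e _ =>
      (le_abs_self _).trans (abs_cross_le_one B e)
    simp only [nsmul_one] at this
    omega
  rw [hsum']
  by_cases hcard : 2 ≤ #B
  · exact hG.four_add_dist6_le hBG hcard fun h => notMem_erase v G.verts (hB (h ▸ hv))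
  have hne : B ≠ ∅ := by
    rintro rfl
    simp [cross] at hsum
  obtain ⟨w, rfl⟩ := card_eq_one.1 (show #B = 1 by
    have := card_pos.2 (nonempty_iff_ne_empty.2 hne)
    omega)
  obtain ⟨hwv, hw⟩ := mem_erase.1 (singleton_subset_iff.1 hB)
  have hpair := hG.six_add_dist6_le_deg (insert_subset hv hBG) (card_pair hwv.symm).ge fun h => by
    have := h ▸ hG.three_le_card
    rw [card_pair hwv.symm] at this
    omega
  have hdeg := deg_pair_add_le hK htgt hwv
  have hexcess : G.excess {v, w} = G.demand v + G.demand w := sum_pair hwv.symm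
  have hvtight := hG.isPosTight v hv
  have hwtight := hG.isPosTight w hw
  rw [excess_singleton]
  unfold IsPosTight dist6 at *
  omega

/-- Removing `v` lowers the cut at the root, and deleting further edges adjusts the total demand. -/
lemma PosCounterexample.deg_erase_sub_le (hG : G.PosCounterexample) (hv : v ∈ G.verts)
    (hr : 1 ≤ G.rootDeg v) :
    G.deg (G.verts.erase v) - (3 - G.rootDeg v).toNat ≤
      4 + dist6 (G.excess (G.verts.erase v) - (3 - G.rootDeg v).toNat) := by
  have htight := hG.isPosTight v hv
  have hsix := hG.good.six_dvd
  have h5 := hG.deg_verts_le_five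
  have hle := hG.good.rootDeg_le hv
  rw [hG.flow_one_verts] at hsix
  rw [hG.good.deg_erase hv, excess_erase hv]
  unfold IsPosTight dist6 at *
  omega

theorem PosCounterexample.false (hG : G.PosCounterexample) : False := by
  classical
  obtain ⟨v, hv, hr⟩ := hG.exists_rootDeg_pos
  obtain ⟨σ, hσ, hflow, hfive⟩ := hG.exists_five_le_card_inEdges hv
  have hH := hG.reorient hσ
  have hle := (hG.good.rootDeg_le hv).trans hG.deg_verts_le_five
  have hin := card_inEdges_singleton_le (G := G.reorient σ) v
  have hdeg := hH.deg_erase_sub_le hv ((rootDeg_reorient v).symm ▸ hr)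
  rw [rootDeg_reorient] at hin hdeg
  obtain ⟨K, hKsub, hKcard⟩ := exists_subset_card_eq
    (s := {e ∈ (G.reorient σ).inEdges {v} | ¬(G.reorient σ).IsRootEdge e})
    (n := (3 - G.rootDeg v).toNat) (by omega)
  have hmem : ∀ e ∈ K, ¬(G.reorient σ).IsRootEdge e ∧ e ∈ G.edges ∧
      (G.reorient σ).tgt e = v ∧ (G.reorient σ).src e ≠ v := fun e he =>
    ⟨(mem_filter.1 (hKsub he)).2, mem_inEdges_singleton.1 (mem_filter.1 (hKsub he)).1⟩
  have hK : K ⊆ G.edges := fun e he => (hmem e he).2.1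
  have hcross : ∀ e ∈ K, (G.reorient σ).cross (G.verts.erase v) e = 1 := fun e he => by
    have := hH.good.src_mem e (hK he)
    have := hmem e he
    grind [cross, IsRootEdge, reorient_verts]
  have hout := hσ.solvesOutside_erase hG.good.toBalanced hv hflow
  have hne : G.verts.erase v ≠ G.verts := fun h => notMem_erase v _ (h ▸ hv)
  have hgood := hH.good_deleteEdges_restrict (erase_subset v _) hne
    (hout.balanced_restrict hG.good.toBalanced (erase_subset v _)) hK hcross (hKcard ▸ hdeg)
    fun B hB => hH.four_add_dist6_le_of_inEdges hv hK (by omega) (fun e he => (hmem e he).2.2.1) hB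
  have hlt : (((G.reorient σ).restrict (G.verts.erase v)).deleteEdges K).size < G.size :=
    add_lt_add_of_lt_of_le (card_erase_lt_of_mem hv) (card_le_card sdiff_subset)
  exact hG.not_solvable (.of_solvesOutside hG.good.toBalanced (erase_subset v _) hout
    (.of_deleteEdges hK (hG.solvable_of_size_lt _ hgood hlt)))

/-- The theorem of Lovász, Thomassen, Wu and Zhang. -/
theorem Good.solvable (hG : G.Good) : G.Solvable := by
  induction h : G.size using Nat.strong_induction_on generalizing G with
  | _ n ih =>
    by_contra hns
    obtain ⟨H, hH⟩ := MinCounterexample.exists_posCounterexample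
      ⟨hG, hns, fun M hM hlt => ih _ (h ▸ hlt) hM rfl⟩
    exact hH.false

end RemoveVertex

end RootedGraph

namespace Multigraph

/-! ### Attaching a root -/

section AddRoot

variable {V E R : Type} [Fintype V] [DecidableEq V] [Fintype E] [Fintype R] {G : Multigraph V E}
  {x : R → V} {s : R → ℤˣ} {t : V → ℤ} {A : Finset V} {σ : E ⊕ R → ℤˣ}

/-- The rooted graph obtained from `G` by joining a new root to `x r` for every `r : R`, where the
new edge is directed towards the root if `s r = 1` and away from it otherwise. The demands are
those for which the edges of `G` have to contribute a net outflow `t v` at every `v`. -/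
@[simps]
def addRoot (G : Multigraph V E) (x : R → V) (s : R → ℤˣ) (t : V → ℤ) :
    RootedGraph (Option V) (E ⊕ R) where
  root := none
  verts := univ.map .some
  edges := univ
  src := Sum.elim (fun e => some (G.fst e)) fun r => if s r = 1 then some (x r) else none
  tgt := Sum.elim (fun e => some (G.snd e)) fun r => if s r = 1 then none else some (x r)
  demand o := o.elim 0 fun v => t v + ∑ r with x r = v, (s r : ℤ)

lemma cross_addRoot_inl (e : E) :
    (G.addRoot x s t).cross (A.map .some) (.inl e) =
      (if G.fst e ∈ A then 1 else 0) - (if G.snd e ∈ A then 1 else 0) := by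
  simp [RootedGraph.cross]

lemma cross_addRoot_inr (r : R) :
    (G.addRoot x s t).cross (A.map .some) (.inr r) = if x r ∈ A then (s r : ℤ) else 0 := by
  rcases Int.units_eq_one_or (s r) with h | h <;>
    simp [RootedGraph.cross, h, show (-1 : ℤˣ) ≠ 1 by decide, apply_ite Neg.neg]

lemma deg_addRoot :
    (G.addRoot x s t).deg (A.map .some) = #(G.cut A) + #{r | x r ∈ A} := by
  simp only [RootedGraph.deg, addRoot_edges, Fintype.sum_sum_type, cross_addRoot_inl,
    cross_addRoot_inr, cut, card_filter, Nat.cast_sum]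
  congr 1
  · refine sum_congr rfl fun e _ => ?_
    by_cases h₁ : G.fst e ∈ A <;> by_cases h₂ : G.snd e ∈ A <;> simp [h₁, h₂]
  · refine sum_congr rfl fun r _ => ?_
    rcases Int.units_eq_one_or (s r) with h | h <;> by_cases hx : x r ∈ A <;> simp [h, hx]

lemma excess_addRoot :
    (G.addRoot x s t).excess (A.map .some) = ∑ v ∈ A, t v + ∑ r with x r ∈ A, (s r : ℤ) := by
  simp only [RootedGraph.excess, sum_map, addRoot_demand, Function.Embedding.some_apply,
    Option.elim_some, sum_add_distrib, sum_filter]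
  rw [sum_comm (s := A)]
  simp

omit [Fintype V] in
lemma outDeg_sub_inDeg (D : E → Bool) (v : V) :
    G.outDeg D v - G.inDeg D v = ∑ e, (if D e then 1 else -1) *
      ((if G.fst e = v then 1 else 0) - (if G.snd e = v then 1 else 0)) := by
  rw [outDeg, inDeg, card_filter, card_filter, Nat.cast_sum, Nat.cast_sum, ← sum_sub_distrib]
  refine sum_congr rfl fun e _ => ?_
  by_cases h : D e <;> simp [tail, head, h]

lemma exists_orientation_of_solvable (h : (G.addRoot x s t).Solvable) :
    ∃ D, ∀ v, 6 ∣ G.outDeg D v - G.inDeg D v - t v := by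
  obtain ⟨σ, hσ, hflow⟩ := h
  refine ⟨fun e => σ (.inl e) = 1, fun v => ?_⟩
  have hroot : ∀ r, σ (.inr r) = 1 := fun r => hσ _ (mem_univ _) (by
    by_cases h : s r = 1 <;> simp [RootedGraph.IsRootEdge, h])
  have hsplit : (G.addRoot x s t).flow σ (({v} : Finset V).map .some) =
      G.outDeg (fun e => σ (.inl e) = 1) v - G.inDeg (fun e => σ (.inl e) = 1) v +
        ∑ r with x r = v, (s r : ℤ) := by
    simp only [RootedGraph.flow, addRoot_edges, Fintype.sum_sum_type, cross_addRoot_inl,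
      cross_addRoot_inr, outDeg_sub_inDeg, mem_singleton, hroot, sum_filter, Units.val_one, one_mul]
    refine congrArg (· + _) (sum_congr rfl fun e _ => ?_)
    rcases Int.units_eq_one_or (σ (.inl e)) with h | h <;> simp [h]
  have := hflow (some v) (by simp)
  rw [map_singleton, Function.Embedding.some_apply] at hsplit
  rw [hsplit, addRoot_demand, Option.elim_some] at this
  simpa using this

lemma balanced_addRoot (ht : ∀ v, 2 ∣ t v - #(G.cut {v})) (hsum : 6 ∣ ∑ v, t v) :
    (G.addRoot x s t).Balanced where
  root_notMem := by simp
  src_mem e _ := by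
    rcases e with e | r
    · simp
    · by_cases h : s r = 1 <;> simp [h]
  tgt_mem e _ := by
    rcases e with e | r
    · simp
    · by_cases h : s r = 1 <;> simp [h]
  two_dvd o ho := by
    obtain ⟨v, -, rfl⟩ := mem_map.1 ho
    have hflow := RootedGraph.two_dvd_flow_sub_deg (G := G.addRoot x s t) 1
      (({v} : Finset V).map .some)
    rw [deg_addRoot] at hflow
    simp only [mem_singleton, map_singleton, Function.Embedding.some_apply] at hflow
    have hsigns := two_dvd_sum_units_sub_card s {r | x r = v}
    have hv := ht v
    simp only [addRoot_demand, Function.Embedding.some_apply, Option.elim_some]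
    omega
  six_dvd := by
    rw [addRoot_verts, excess_addRoot]
    simpa [RootedGraph.flow, cross_addRoot_inl, cross_addRoot_inr] using hsum

end AddRoot

/-! ### Cuts of size four -/

section FourSets

variable {V E : Type} [Fintype V] [DecidableEq V] [Fintype E] {G : Multigraph V E}
  {A B L M : Finset V}

lemma cut_compl (G : Multigraph V E) (A : Finset V) : G.cut Aᶜ = G.cut A := by
  ext e
  simp only [cut, mem_filter, mem_compl, not_iff_not]

omit [Fintype V] in
lemma card_cut_inter_add_card_cut_union_le (G : Multigraph V E) (A B : Finset V) :
    #(G.cut (A ∩ B)) + #(G.cut (A ∪ B)) ≤ #(G.cut A) + #(G.cut B) := by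
  simp only [cut, card_filter, ← sum_add_distrib]
  refine sum_le_sum fun e _ => ?_
  by_cases h₁ : G.fst e ∈ A <;> by_cases h₂ : G.snd e ∈ A <;> by_cases h₃ : G.fst e ∈ B <;>
    by_cases h₄ : G.snd e ∈ B <;> simp [h₁, h₂, h₃, h₄]

omit [Fintype V] in
lemma two_dvd_sum_card_cut_singleton_sub (G : Multigraph V E) (A : Finset V) :
    2 ∣ ∑ v ∈ A, (#(G.cut {v}) : ℤ) - #(G.cut A) := by
  have hcount : ∀ v e, (¬(G.fst e = v ↔ G.snd e = v)) ↔ G.fst e = v ∨ G.snd e = v := fun v e => by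
    have := G.no_loop e
    grind
  simp only [cut, card_filter, mem_singleton, hcount, Nat.cast_sum]
  rw [sum_comm, ← sum_sub_distrib]
  refine dvd_sum fun e _ => ?_
  have hsplit : ∀ v, ((if G.fst e = v ∨ G.snd e = v then 1 else 0 : ℕ) : ℤ) =
      (if G.fst e = v then 1 else 0) + (if G.snd e = v then 1 else 0) := fun v => by
    have := G.no_loop e
    grind
  simp only [hsplit, sum_add_distrib, sum_ite_eq]
  by_cases h₁ : G.fst e ∈ A <;> by_cases h₂ : G.snd e ∈ A <;> simp [h₁, h₂]

lemma cut_filter_iff_eq_empty (h : G.cut A = G.cut B) :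
    G.cut {v | v ∈ A ↔ v ∈ B} = ∅ := by
  ext e
  have he := Finset.ext_iff.1 h e
  simp only [cut, mem_filter, mem_univ, true_and, notMem_empty, iff_false] at he ⊢
  tauto

lemma EdgeConnected.eq_or_eq_compl_of_cut_eq {k : ℕ} (hG : G.EdgeConnected (k + 1))
    (h : G.cut A = G.cut B) : B = A ∨ B = Aᶜ := by
  have hC := hG {v | v ∈ A ↔ v ∈ B}
  rw [cut_filter_iff_eq_empty h, card_empty] at hC
  by_contra! hne
  refine (hC ?_ ?_).not_gt k.succ_pos
  · by_contra! hempty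
    refine hne.2 (ext fun v => ?_)
    have hv := filter_eq_empty_iff.1 hempty (mem_univ v)
    rw [mem_compl]
    tauto
  · exact fun huniv => hne.1 (ext fun v => (filter_eq_self.1 huniv v (mem_univ v)).symm)

/-- The sets whose boundary consists of exactly four edges. -/
def fourSets (G : Multigraph V E) : Finset (Finset V) :=
  {A | A.Nonempty ∧ A ≠ univ ∧ #(G.cut A) = 4}

lemma mem_fourSets : A ∈ G.fourSets ↔ A.Nonempty ∧ A ≠ univ ∧ #(G.cut A) = 4 := by
  simp [fourSets]

lemma compl_mem_fourSets (hA : A ∈ G.fourSets) : Aᶜ ∈ G.fourSets := by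
  obtain ⟨hne, huniv, hcard⟩ := mem_fourSets.1 hA
  exact mem_fourSets.2 ⟨nonempty_iff_ne_empty.2 fun h => huniv (compl_eq_empty_iff A |>.1 h),
    fun h => hne.ne_empty (compl_eq_univ_iff A |>.1 h), by rwa [cut_compl]⟩

lemma inter_mem_fourSets (h4 : G.EdgeConnected 4) (hA : A ∈ G.fourSets) (hB : B ∈ G.fourSets)
    (hAB : (A ∩ B).Nonempty) (hunion : A ∪ B ≠ univ) : A ∩ B ∈ G.fourSets := by
  obtain ⟨hneA, huA, hcA⟩ := mem_fourSets.1 hA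
  obtain ⟨-, -, hcB⟩ := mem_fourSets.1 hB
  have hinter : A ∩ B ≠ univ := fun h => huA (univ_subset_iff.1 (h ▸ inter_subset_left))
  have hsub := card_cut_inter_add_card_cut_union_le G A B
  have h₁ := h4 _ hAB hinter
  have h₂ := h4 _ (hneA.mono subset_union_left) hunion
  exact mem_fourSets.2 ⟨hAB, hinter, by omega⟩

lemma card_fourSets_le [DecidableEq E] (h4 : G.EdgeConnected 4) :
    #G.fourSets ≤ 2 * #(G.kCuts 4) := by
  refine card_le_mul_card_image (f := G.cut) _ _ fun C hC => ?_
  obtain ⟨A, -, rfl⟩ := mem_image.1 hC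
  refine (card_le_card (t := {A, Aᶜ}) fun B hB => ?_).trans card_le_two
  rw [mem_insert, mem_singleton]
  exact h4.eq_or_eq_compl_of_cut_eq (mem_filter.1 hB).2.symm

/-- The minimal sets whose boundary consists of exactly four edges. -/
def leaves (G : Multigraph V E) : Finset (Finset V) :=
  {L ∈ G.fourSets | ∀ B ∈ G.fourSets, B ⊆ L → B = L}

/-- The leaves contained in `A`. -/
def leavesIn (G : Multigraph V E) (A : Finset V) : Finset (Finset V) := {L ∈ G.leaves | L ⊆ A}

lemma mem_fourSets_of_mem_leaves (hL : L ∈ G.leaves) : L ∈ G.fourSets := (mem_filter.1 hL).1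

lemma eq_of_subset_of_mem_leaves (hL : L ∈ G.leaves) (hA : A ∈ G.fourSets) (h : A ⊆ L) : A = L :=
  (mem_filter.1 hL).2 A hA h

lemma leavesIn_nonempty (hA : A ∈ G.fourSets) : (G.leavesIn A).Nonempty := by
  obtain ⟨L, hLA, hL⟩ := exists_le_minimal G.fourSets hA
  exact ⟨L, mem_filter.2 ⟨mem_filter.2 ⟨hL.prop, fun B hB h => h.antisymm (hL.le_of_le hB h)⟩, hLA⟩⟩

lemma subset_of_mem_leaves (h4 : G.EdgeConnected 4) (hL : L ∈ G.leaves) (hA : A ∈ G.fourSets)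
    (hLA : (L ∩ A).Nonempty) : L ⊆ A := by
  have hL4 := mem_fourSets_of_mem_leaves hL
  by_cases hunion : L ∪ A = univ
  · have hAL := eq_of_subset_of_mem_leaves hL (compl_mem_fourSets hA) fun v hv =>
      (mem_union.1 (hunion ▸ mem_univ v)).resolve_right (mem_compl.1 hv)
    obtain ⟨v, hv⟩ := hLA
    rw [mem_inter, ← hAL, mem_compl] at hv
    exact absurd hv.2 hv.1
  · exact inter_eq_left.1 <|
      eq_of_subset_of_mem_leaves hL (inter_mem_fourSets h4 hL4 hA hLA hunion) inter_subset_left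

lemma disjoint_of_mem_leaves (h4 : G.EdgeConnected 4) (hL : L ∈ G.leaves) (hM : M ∈ G.leaves)
    (hne : L ≠ M) : Disjoint L M := by
  rw [disjoint_iff_inter_eq_empty]
  by_contra h
  have hM4 := mem_fourSets_of_mem_leaves hM
  have hLM := subset_of_mem_leaves h4 hL hM4 (nonempty_iff_ne_empty.2 h)
  exact hne (eq_of_subset_of_mem_leaves hM (mem_fourSets_of_mem_leaves hL) hLM)

lemma leavesIn_leaf (hL : L ∈ G.leaves) : G.leavesIn L = {L} :=
  eq_singleton_iff_unique_mem.2 ⟨mem_filter.2 ⟨hL, Subset.rfl⟩, fun _ hM =>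
    eq_of_subset_of_mem_leaves hL (mem_fourSets_of_mem_leaves (mem_filter.1 hM).1)
      (mem_filter.1 hM).2⟩

lemma leavesIn_compl_leaf (h4 : G.EdgeConnected 4) (hL : L ∈ G.leaves) :
    G.leavesIn Lᶜ = G.leaves.erase L := by
  ext M
  rw [leavesIn, mem_filter, mem_erase, subset_compl_iff_disjoint_right, and_comm]
  refine and_congr_left fun hM => ⟨?_, disjoint_of_mem_leaves h4 hM hL⟩
  rintro hdisj rfl
  exact (mem_fourSets.1 (mem_fourSets_of_mem_leaves hM)).1.ne_empty (disjoint_self.1 hdisj)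

end FourSets

section RootPlan

variable {V E : Type} [Fintype V] [DecidableEq V] [Fintype E] {G : Multigraph V E}
  {A L : Finset V}

/-- The leaves that are the only member of `fourSets` containing no other leaf. A single root edge
can be attached to such a leaf without spoiling any other 4-edge cut. -/
def soloLeaves (G : Multigraph V E) : Finset (Finset V) :=
  {L ∈ G.leaves | ∀ A ∈ G.fourSets, G.leavesIn A = {L} → A = L}

lemma soloLeaves_subset (G : Multigraph V E) : G.soloLeaves ⊆ G.leaves := filter_subset _ _

lemma sum_card_filter_leavesIn_eq_singleton_le (G : Multigraph V E) :
    ∑ L ∈ G.leaves, #{A ∈ G.fourSets | G.leavesIn A = {L}} ≤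
      #{A ∈ G.fourSets | #(G.leavesIn A) = 1} := by
  rw [← card_biUnion]
  · refine card_le_card (biUnion_subset.2 fun L _ => monotone_filter_right _ fun A _ hA => ?_)
    rw [hA, card_singleton]
  · refine fun L _ M _ hne => disjoint_filter.2 fun A _ hL hM => hne ?_
    exact singleton_injective (hL.symm.trans hM)

lemma card_leaves_add_card_sdiff_soloLeaves_le (G : Multigraph V E) :
    #G.leaves + #(G.leaves \ G.soloLeaves) ≤ #{A ∈ G.fourSets | #(G.leavesIn A) = 1} := by
  refine le_trans ?_ G.sum_card_filter_leavesIn_eq_singleton_le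
  rw [sdiff_eq_filter, card_filter, card_eq_sum_ones G.leaves, ← sum_add_distrib]
  refine sum_le_sum fun L hL => ?_
  have hmem : L ∈ {A ∈ G.fourSets | G.leavesIn A = {L}} :=
    mem_filter.2 ⟨mem_fourSets_of_mem_leaves hL, leavesIn_leaf hL⟩
  split_ifs with hsolo
  · exact card_pos.2 ⟨L, hmem⟩
  · simp only [soloLeaves, mem_filter, hL, true_and, not_forall] at hsolo
    obtain ⟨A, hA, hAL, hne⟩ := hsolo
    exact one_lt_card.2 ⟨A, mem_filter.2 ⟨hA, hAL⟩, L, hmem, hne⟩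

lemma card_leaves_le_card_filter_leavesIn_ne_one (h4 : G.EdgeConnected 4) (h3 : 3 ≤ #G.leaves) :
    #G.leaves ≤ #{A ∈ G.fourSets | #(G.leavesIn A) ≠ 1} := by
  refine card_le_card_of_injOn compl (fun L hL => ?_) compl_injective.injOn
  refine mem_filter.2 ⟨compl_mem_fourSets (mem_fourSets_of_mem_leaves hL), ?_⟩
  rw [leavesIn_compl_leaf h4 hL, card_erase_of_mem hL]
  omega

lemma three_mul_card_leaves_le (h4 : G.EdgeConnected 4) (h3 : 3 ≤ #G.leaves) :
    3 * #G.leaves ≤ #G.fourSets + #G.soloLeaves := by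
  have hone := G.card_leaves_add_card_sdiff_soloLeaves_le
  have hmore := card_leaves_le_card_filter_leavesIn_ne_one h4 h3
  have hsplit := card_filter_add_card_filter_not (s := G.fourSets) fun A => #(G.leavesIn A) = 1
  have hsdiff := card_sdiff_add_card_eq_card G.soloLeaves_subset
  simp only [← ne_eq] at hsplit
  omega

/-- A way of attaching a new root to `G`: the leaf `L` receives `w L` root edges whose directions
add up to `s L`. The last two conditions are those of the Lovász–Thomassen–Wu–Zhang theorem at the
root and at the 4-edge cuts. -/
structure IsRootPlan (G : Multigraph V E) (t : V → ℤ) (w : Finset V → ℕ) (s : Finset V → ℤ) :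
    Prop where
  abs_le : ∀ L ∈ G.leaves, |s L| ≤ w L
  two_dvd : ∀ L ∈ G.leaves, 2 ∣ s L - w L
  sum_le : ∑ L ∈ G.leaves, (w L : ℤ) ≤ 4 + dist6 (∑ L ∈ G.leaves, s L)
  dist6_le : ∀ A ∈ G.fourSets,
    dist6 (∑ v ∈ A, t v + ∑ L ∈ G.leavesIn A, s L) ≤ ∑ L ∈ G.leavesIn A, (w L : ℤ)

lemma dist6_le_sum_leavesIn {t : V → ℤ} {w : Finset V → ℕ} {s : Finset V → ℤ}
    (hw : ∀ L ∈ G.leaves, 1 ≤ w L) (hpar : ∀ L ∈ G.leaves, 2 ∣ s L - w L)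
    (hone : ∀ L ∈ G.leaves, w L = 1 → L ∈ G.soloLeaves ∧ dist6 (∑ v ∈ L, t v + s L) ≤ 1)
    (hA : A ∈ G.fourSets) (ht : 2 ∣ ∑ v ∈ A, t v) :
    dist6 (∑ v ∈ A, t v + ∑ L ∈ G.leavesIn A, s L) ≤ ∑ L ∈ G.leavesIn A, (w L : ℤ) := by
  have hsub : G.leavesIn A ⊆ G.leaves := filter_subset _ _
  by_cases htwo : 2 ≤ ∑ L ∈ G.leavesIn A, (w L : ℤ)
  · refine dist6_le_of_two_dvd_sub ?_ htwo
    have := dvd_sum fun L hL => hpar L (hsub hL)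
    rw [sum_sub_distrib] at this
    omega
  · obtain ⟨L, hAL, hwL⟩ := eq_singleton_of_sum_le_one (fun L hL => hw L (hsub hL))
      (leavesIn_nonempty hA) (by have := Nat.cast_sum (R := ℤ) (G.leavesIn A) w; omega)
    obtain ⟨hsolo, hdist⟩ := hone L (hsub (hAL ▸ mem_singleton_self L)) hwL
    obtain rfl := (mem_filter.1 hsolo).2 A hA hAL
    simpa [hAL, hwL] using hdist

/-- Attach one edge to each leaf of `Q`, three edges to `L₀` and two edges to every other leaf.
Choosing the directions at `L₀` last, the total is `3` modulo `6`, so that `7` root edges are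
allowed. -/
lemma exists_isRootPlan_of_subset_soloLeaves {t : V → ℤ} (ht : ∀ A ∈ G.fourSets, 2 ∣ ∑ v ∈ A, t v)
    {Q : Finset (Finset V)} {L₀ : Finset V} (hQ : Q ⊆ G.soloLeaves) (hL₀ : L₀ ∈ G.leaves \ Q)
    (heven : 2 ∣ (#Q : ℤ)) (hcard : 2 * #G.leaves ≤ #Q + 6) : ∃ w s, G.IsRootPlan t w s := by
  obtain ⟨hL₀, hL₀Q⟩ := mem_sdiff.1 hL₀
  have hQl : Q ⊆ G.leaves := hQ.trans G.soloLeaves_subset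
  have hunit : ∀ L ∈ Q, ∃ u : ℤˣ, dist6 (∑ v ∈ L, t v + u) ≤ 1 := fun L hL =>
    exists_unit_dist6_add_le_one (ht L (mem_fourSets_of_mem_leaves (hQl hL)))
  choose! σ hσ using hunit
  have hσQ := two_dvd_sum_units_sub_card σ Q
  obtain ⟨s₀, hs₀, hs₀6⟩ := exists_abs_sub_le_and_six_dvd_sub (a := 0) (m := 3)
    (d := 3 - ∑ L ∈ Q, (σ L : ℤ)) (by norm_num) (by omega)
  let w : Finset V → ℕ := fun L => if L = L₀ then 3 else if L ∈ Q then 1 else 2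
  let s : Finset V → ℤ := fun L => (if L = L₀ then s₀ else 0) + if L ∈ Q then (σ L : ℤ) else 0
  have hsum_w : ∑ L ∈ G.leaves, w L + #Q = 2 * #G.leaves + 1 := by
    have hw : ∀ L, w L + (if L ∈ Q then 1 else 0) = 2 + if L = L₀ then 1 else 0 := by grind
    have := sum_congr (rfl : G.leaves = G.leaves) fun L _ => hw L
    simp only [sum_add_distrib, sum_ite_eq', hL₀, if_true, sum_const, smul_eq_mul, sum_boole,
      filter_mem_eq_inter, inter_eq_right.2 hQl, Nat.cast_id] at this
    rw [this, mul_comm]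
  have hsum_s : ∑ L ∈ G.leaves, s L = s₀ + ∑ L ∈ Q, (σ L : ℤ) := by
    simp only [s, sum_add_distrib, sum_ite_eq', hL₀, if_true, ← sum_filter, filter_mem_eq_inter,
      inter_eq_right.2 hQl]
  have hs : ∀ L, |s L| ≤ w L ∧ 2 ∣ s L - w L := fun L => by
    by_cases hL : L = L₀
    · subst hL
      simp only [w, s, if_true, if_neg hL₀Q]
      exact ⟨by simpa using hs₀, by push_cast; omega⟩
    · by_cases hLQ : L ∈ Q
      · rcases Int.units_eq_one_or (σ L) with h | h <;> simp [w, s, hL, hLQ, h]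
      · simp [w, s, hL, hLQ]
  refine ⟨w, s, fun L _ => (hs L).1, fun L _ => (hs L).2, ?_, fun A hA =>
    dist6_le_sum_leavesIn ?_ (fun L _ => (hs L).2) ?_ hA (ht A hA)⟩
  · rw [hsum_s, dist6_congr (y := 3) (by omega), ← Nat.cast_sum]
    have : dist6 3 = 3 := rfl
    omega
  · grind
  · intro L _ hwL
    have hLQ : L ∈ Q ∧ L ≠ L₀ := by grind
    simpa [s, hLQ] using ⟨hQ hLQ.1, hσ L hLQ.1⟩

lemma exists_isRootPlan (h4 : G.EdgeConnected 4) (hc4 : #G.fourSets ≤ 10) {t : V → ℤ}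
    (ht : ∀ A ∈ G.fourSets, 2 ∣ ∑ v ∈ A, t v) : ∃ w s, G.IsRootPlan t w s := by
  rcases G.leaves.eq_empty_or_nonempty with hempty | hne
  · refine ⟨0, 0, by simp [hempty], by simp [hempty], by simp [hempty, dist6], fun A hA => ?_⟩
    have := (leavesIn_nonempty hA).mono (filter_subset _ _)
    simp [hempty] at this
  have hle : #G.soloLeaves ≤ #G.leaves := card_le_card G.soloLeaves_subset
  have hcount : 2 * #G.leaves - 6 ≤ #G.soloLeaves ∧ #G.leaves ≤ 5 := by
    by_cases h3 : 3 ≤ #G.leaves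
    · have := three_mul_card_leaves_le h4 h3
      omega
    · omega
  obtain ⟨Q, hQ, hQcard⟩ := exists_subset_card_eq hcount.1
  obtain ⟨L₀, hL₀⟩ : (G.leaves \ Q).Nonempty := card_pos.1 <| by
    have := le_card_sdiff Q G.leaves
    have := card_pos.2 hne
    omega
  exact exists_isRootPlan_of_subset_soloLeaves ht hQ hL₀ (by omega) (by omega)

end RootPlan

section Orientation

variable {V E R : Type} [Fintype V] [DecidableEq V] [Fintype E] [Fintype R]
  {G : Multigraph V E} {x : R → V} {u : R → ℤˣ} {t : V → ℤ} {w : Finset V → ℕ} {s : Finset V → ℤ}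
  {A : Finset V}

lemma IsRootPlan.exists_units (hP : G.IsRootPlan t w s) :
    ∃ u : (Σ L : G.leaves, Fin (w L)) → ℤˣ, ∀ L, ∑ i, (u ⟨L, i⟩ : ℤ) = s L := by
  have hL : ∀ L : G.leaves, ∃ u : Fin (w L) → ℤˣ, ∑ i, (u i : ℤ) = s L := fun L => by
    obtain ⟨u, -, hu⟩ := exists_units_sum_mul_eq (F := univ) (k := s L)
      (f := fun _ : Fin (w L) => (1 : ℤ)) (by simp) (by simpa using hP.abs_le L L.2)
      (by simpa using hP.two_dvd L L.2)
    exact ⟨u, by simpa using hu⟩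
  choose u hu using hL
  exact ⟨fun r => u r.1 r.2, hu⟩

lemma sum_filter_mem_eq_sum_leavesIn {x : (Σ L : G.leaves, Fin (w L)) → V}
    {f : (Σ L : G.leaves, Fin (w L)) → ℤ} (hx : ∀ r, x r ∈ A ↔ r.1.1 ⊆ A)
    (hf : ∀ L, ∑ i, f ⟨L, i⟩ = s L) : ∑ r with x r ∈ A, f r = ∑ L ∈ G.leavesIn A, s L := by
  simp only [hx, sum_filter, Fintype.sum_sigma, leavesIn]
  rw [← sum_coe_sort G.leaves]
  refine sum_congr rfl fun L _ => ?_
  split_ifs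
  · exact hf L
  · exact sum_const_zero

lemma two_dvd_sum_of_mem_fourSets (ht : ∀ v, 2 ∣ t v - #(G.cut {v})) (hA : A ∈ G.fourSets) :
    2 ∣ ∑ v ∈ A, t v := by
  have h₁ := G.two_dvd_sum_card_cut_singleton_sub A
  have h₂ := dvd_sum fun v (_ : v ∈ A) => ht v
  rw [(mem_fourSets.1 hA).2.2] at h₁
  rw [sum_sub_distrib] at h₂
  omega

/-- The degree modulo `2` and the boundary function modulo `3`, merged into one integer. Since a net
outflow has the parity of the degree, it is `β v` modulo `3` exactly if it is `demandOf G β v`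
modulo `6`. -/
def demandOf (G : Multigraph V E) (β : V → ZMod 3) (v : V) : ℤ :=
  3 * #(G.cut {v}) + 4 * (β v).val

lemma six_dvd_sum_demandOf {β : V → ZMod 3} (hβ : IsBoundary β) : 6 ∣ ∑ v, G.demandOf β v := by
  have hdeg := G.two_dvd_sum_card_cut_singleton_sub univ
  have hval : (3 : ℤ) ∣ ∑ v, ((β v).val : ℤ) := by
    refine (ZMod.intCast_zmod_eq_zero_iff_dvd _ 3).1 ?_
    simpa [IsBoundary] using hβ
  simp only [demandOf, sum_add_distrib, ← mul_sum]
  have hcut : #(G.cut univ) = 0 := by simp [cut]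
  omega

variable [DecidableEq E]

lemma mem_kCuts_of_card_cut_eq {k : ℕ} (hA : A.Nonempty) (huniv : A ≠ univ)
    (hk : #(G.cut A) = k) : G.cut A ∈ G.kCuts k :=
  mem_image_of_mem _ (mem_filter.2 ⟨mem_univ _, hA, huniv, hk⟩)

lemma good_addRoot (h4 : G.EdgeConnected 4) (hc5 : G.kCuts 5 = ∅)
    (ht : ∀ v, 2 ∣ t v - #(G.cut {v})) (hsum : 6 ∣ ∑ v, t v)
    (hroot : Fintype.card R ≤ 4 + dist6 (∑ r, (u r : ℤ)))
    (hfour : ∀ A ∈ G.fourSets,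
      dist6 (∑ v ∈ A, t v + ∑ r with x r ∈ A, (u r : ℤ)) ≤ #{r | x r ∈ A}) :
    (G.addRoot x u t).Good where
  toBalanced := balanced_addRoot ht hsum
  root_le := by
    rw [addRoot_verts, deg_addRoot, excess_addRoot,
      dist6_congr (y := ∑ r, (u r : ℤ)) (by simpa using hsum)]
    simpa [cut] using hroot
  le_deg B hB hne huniv := by
    obtain ⟨A, -, rfl⟩ := subset_map_iff.1 hB
    have hA : A.Nonempty := by simpa using hne
    have hAuniv : A ≠ univ := fun h => huniv (by rw [h, addRoot_verts])
    have hpar := (balanced_addRoot (x := x) (s := u) ht hsum).two_dvd_excess_sub_deg hB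
    rw [excess_addRoot, deg_addRoot] at hpar ⊢
    have hge := h4 A hA hAuniv
    have hne5 : #(G.cut A) ≠ 5 := fun h => by
      simpa [hc5] using mem_kCuts_of_card_cut_eq hA hAuniv h
    by_cases hcard : #(G.cut A) = 4
    · have := hfour A (mem_fourSets.2 ⟨hA, hAuniv, hcard⟩)
      omega
    · unfold dist6
      omega

lemma IsRootPlan.exists_good (hP : G.IsRootPlan t w s) (h4 : G.EdgeConnected 4)
    (hc5 : G.kCuts 5 = ∅) (ht : ∀ v, 2 ∣ t v - #(G.cut {v})) (hsum : 6 ∣ ∑ v, t v) :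
    ∃ (x : (Σ L : G.leaves, Fin (w L)) → V) (u : (Σ L : G.leaves, Fin (w L)) → ℤˣ),
      (G.addRoot x u t).Good := by
  have hpoint : ∀ L : G.leaves, ∃ v, v ∈ L.1 := fun L =>
    (mem_fourSets.1 (mem_fourSets_of_mem_leaves L.2)).1
  choose p hp using hpoint
  obtain ⟨u, hu⟩ := hP.exists_units
  have hone : ∀ L : G.leaves, ∑ _i : Fin (w L), (1 : ℤ) = w L := by simp
  refine ⟨fun r => p r.1, u, good_addRoot h4 hc5 ht hsum ?_ fun A hA => ?_⟩
  · simp only [Fintype.card_sigma, Fintype.card_fin, Nat.cast_sum, Fintype.sum_sigma, hu]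
    rw [sum_coe_sort G.leaves s, sum_coe_sort G.leaves fun L => (w L : ℤ)]
    exact hP.sum_le
  · have hmem : ∀ r : Σ L : G.leaves, Fin (w L), p r.1 ∈ A ↔ r.1.1 ⊆ A := fun r =>
      ⟨fun h => subset_of_mem_leaves h4 r.1.2 hA ⟨_, mem_inter.2 ⟨hp r.1, h⟩⟩, fun h => h (hp r.1)⟩
    rw [card_eq_sum_ones, Nat.cast_sum, sum_filter_mem_eq_sum_leavesIn hmem hu,
      Nat.cast_one, sum_filter_mem_eq_sum_leavesIn (s := fun L => (w L : ℤ)) hmem hone]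
    exact hP.dist6_le A hA

lemma exists_orientation (h4 : G.EdgeConnected 4) (hc4 : #(G.kCuts 4) ≤ 5)
    (hc5 : G.kCuts 5 = ∅) (ht : ∀ v, 2 ∣ t v - #(G.cut {v})) (hsum : 6 ∣ ∑ v, t v) :
    ∃ D, ∀ v, 6 ∣ G.outDeg D v - G.inDeg D v - t v := by
  have hcard : #G.fourSets ≤ 10 := (card_fourSets_le h4).trans (by omega)
  obtain ⟨w, s, hP⟩ := exists_isRootPlan h4 hcard fun A => two_dvd_sum_of_mem_fourSets ht
  obtain ⟨x, u, hgood⟩ := hP.exists_good h4 hc5 ht hsum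
  exact exists_orientation_of_solvable hgood.solvable

end Orientation

/-- Every 4-edge-connected graph with at most five edge-cuts of size 4 and no
edge-cuts of size 5 is `ℤ₃`-connected. -/
theorem stmt_17 {V E : Type} [Fintype V] [DecidableEq V] [Fintype E] [DecidableEq E] (G : Multigraph V E)
    (h4 : G.EdgeConnected 4) (hc4 : (G.kCuts 4).card ≤ 5)
    (hc5 : G.kCuts 5 = ∅) :
    G.Z3Connected := by
  intro β hβ
  have hpar : ∀ v, 2 ∣ G.demandOf β v - #(G.cut {v}) := fun v => by unfold demandOf; omega
  obtain ⟨D, hD⟩ := exists_orientation h4 hc4 hc5 hpar (six_dvd_sum_demandOf hβ)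
  refine ⟨D, fun v => ?_⟩
  have hthree : (3 : ℤ) ∣ G.outDeg D v - G.inDeg D v - (β v).val := by
    have := hD v
    unfold demandOf at this
    omega
  rw [← sub_eq_zero]
  simpa using (ZMod.intCast_zmod_eq_zero_iff_dvd _ 3).2 hthree

end Multigraph
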